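/- arXiv:0708.0433 — 2 statements merged into one kernel-verified Lean document; each statement's English description precedes it below -/
import Mathlib

section
/- Let m ≥ 1 and let α, β be real numbers with β ≠ 0. Define the m×m matrix U by U_{ij} = sinh(α(i+j+m)/2)/sinh(β(i+j+m)/2) − sinh(α(j−i+m)/2)/sinh(β(j−i+m)/2) for 1 ≤ i,j ≤ m. Then det U = [∏_{1≤i<j≤2m} 2·sinh(β(j−i)/2)] · [∏_{i=1}^{2m+1} ∏_{j=1}^{m} 2·sinh((α+β(2j−i))/2)] / [∏_{i=1}^{m} ∏_{j=1}^{m} 4·sinh(β(m+j−i)/2)·sinh(β(m+j+i)/2)]. -/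
open Finset

open Polynomial

open Matrix hiding inv_zpow zpow_mul zpow_neg

/-!
With `u = exp (α / 2)` and `v = exp (β / 2)` every `2 sinh` becomes `x - x⁻¹` for a monomial `x`
in `u` and `v`, and after rescaling rows and columns the determinant is a polynomial `P` in `u ^ 2`
of degree at most `m (2 m + 1)`. At `u = v ^ k` the matrix is a sum of `|k| / 2` rank one
matrices, because its entries satisfy a second order recursion in `k`, so `v ^ (2 k)` is a root of
`P` of multiplicity at least `m - |k| / 2`. These roots exhaust the degree. The remaining constant
is read off at `u = 0`, where the matrix degenerates to a Cauchy matrix.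
-/

/-! ### Determinants and ranks -/

theorem prod_dvd_det_of_dvd_row {n R : Type*} [Fintype n] [DecidableEq n] [CommRing R]
    {M : Matrix n n R} {d : n → R} (h : ∀ i j, d i ∣ M i j) : ∏ i, d i ∣ M.det := by
  choose N hN using h
  have hM : M = Matrix.of fun i j => d i * N i j := Matrix.ext hN
  rw [hM]
  exact (dvd_mul_right _ _).trans (det_mul_column d N).symm.dvd

theorem matrix_rank_add_le {m n K : Type*} [Finite m] [Fintype n] [Field K] (A B : Matrix m n K) :
    (A + B).rank ≤ A.rank + B.rank := by
  rw [rank, mulVecLin_add]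
  exact (Submodule.finrank_mono (LinearMap.range_add_le _ _)).trans
    (Submodule.finrank_add_le_finrank_add_finrank _ _)

theorem eval_det_eq_det_map_eval {n R : Type*} [Fintype n] [DecidableEq n] [CommRing R] (a : R)
    (M : Matrix n n R[X]) : M.det.eval a = (M.map (eval a)).det := by
  rw [← coe_evalRingHom, RingHom.map_det]
  rfl

theorem X_sub_C_pow_card_sub_rank_dvd_det {n K : Type*} [Fintype n] [DecidableEq n] [Field K]
    (M : Matrix n n K[X]) (a : K) :
    (X - C a) ^ (Fintype.card n - (M.map (eval a)).rank) ∣ M.det := by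
  -- Multiply `M` by constant matrices so that all rows but `rank` many vanish at `a`.
  obtain ⟨V, U, e, hV, hU, hVU⟩ := exists_rank_normal_form (M.map (eval a))
  have hdet {W : Matrix n n K} (hW : IsUnit W) : IsUnit (W.map C).det := by
    rw [← RingHom.mapMatrix_apply, ← RingHom.map_det]
    exact ((isUnit_iff_isUnit_det W).mp hW).map C
  have heval : (V.map C * M * U.map C).map (eval a) =
      (fromBlocks 1 0 0 0).submatrix e e := by
    rw [← hVU, ← coe_evalRingHom, Matrix.map_mul, Matrix.map_mul]
    congr <;> ext <;> simp
  have hrow (i j : n) : (e i).elim (fun _ => 1) (fun _ => X - C a) ∣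
      (V.map C * M * U.map C) i j := by
    rcases hi : e i with s | s
    · exact one_dvd _
    · refine dvd_iff_isRoot.mpr ((congrFun₂ heval i j).trans ?_)
      rcases hj : e j with t | t <;> simp [hi, hj]
  have hprod := prod_dvd_det_of_dvd_row hrow
  rw [e.prod_comp fun s => s.elim (fun _ => (1 : K[X])) fun _ => X - C a] at hprod
  simpa [Fintype.prod_sum_type, (hdet hU).dvd_mul_right, (hdet hV).dvd_mul_left] using hprod

theorem natDegree_det_le_sum_add_sum {n R : Type*} [Fintype n] [DecidableEq n] [CommRing R]
    {M : Matrix n n R[X]} {d e : n → ℕ} (h : ∀ i j, (M i j).natDegree ≤ d i + e j) :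
    M.det.natDegree ≤ ∑ i, d i + ∑ j, e j := by
  rw [det_apply]
  refine natDegree_sum_le_of_forall_le _ _ fun σ _ => (natDegree_smul_le _ _).trans ?_
  calc (∏ i, M (σ i) i).natDegree
      ≤ ∑ i, (d (σ i) + e i) := (natDegree_prod_le _ _).trans (sum_le_sum fun i _ => h (σ i) i)
    _ = ∑ i, d i + ∑ j, e j := by rw [sum_add_distrib, Equiv.sum_comp σ d]

theorem det_succ_eq_mul_det_sub_div {K : Type*} [Field K] {n : ℕ}
    (A : Matrix (Fin (n + 1)) (Fin (n + 1)) K) (h : A 0 0 ≠ 0) :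
    A.det = A 0 0 *
      (Matrix.of fun i j : Fin n => A i.succ j.succ - A i.succ 0 / A 0 0 * A 0 j.succ).det := by
  let c : Fin (n + 1) → K := Fin.cons 0 fun i => -(A i.succ 0 / A 0 0)
  have hdet : (Matrix.of fun i j => A i j + c i * A 0 j).det = A.det :=
    det_eq_of_forall_row_eq_smul_add_const c 0 rfl fun _ _ => rfl
  have hcol (i : Fin n) : A i.succ 0 + c i.succ * A 0 0 = 0 := by simp [c, h]
  rw [← hdet, det_succ_column_zero, Fin.sum_univ_succ]
  simp only [of_apply, hcol, mul_zero, zero_mul, sum_const_zero, add_zero]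
  simp [c, submatrix, sub_eq_add_neg]

theorem inv_sub_div_mul_inv_cauchy {K : Type*} [Field K] {x z w y x₀ z₀ w₀ y₀ : K}
    (h₁₀ : x * w₀ + z * y₀ ≠ 0) (h₀₁ : x₀ * w + z₀ * y ≠ 0)
    (h₁₁ : x * w + z * y ≠ 0) :
    (x * w + z * y)⁻¹ -
        (x * w₀ + z * y₀)⁻¹ / (x₀ * w₀ + z₀ * y₀)⁻¹ * (x₀ * w + z₀ * y)⁻¹ =
      (x * z₀ - x₀ * z) / (x * w₀ + z * y₀) *
        ((y * w₀ - y₀ * w) / (x₀ * w + z₀ * y) * (x * w + z * y)⁻¹) := by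
  have hnum : (x * w₀ + z * y₀) * (x₀ * w + z₀ * y) - (x₀ * w₀ + z₀ * y₀) * (x * w + z * y) =
      (x * z₀ - x₀ * z) * (y * w₀ - y₀ * w) := by ring
  generalize x * w + z * y = p₁₁, x * w₀ + z * y₀ = p₁₀, x₀ * w + z₀ * y = p₀₁,
    x₀ * w₀ + z₀ * y₀ = p₀₀ at *
  field_simp
  linear_combination hnum

theorem det_inv_cauchy {K : Type*} [Field K] {n : ℕ} (x z w y : Fin n → K)
    (h : ∀ i j, x i * w j + z i * y j ≠ 0) :
    (Matrix.of fun i j => (x i * w j + z i * y j)⁻¹).det =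
      (∏ i, ∏ j ∈ Ioi i, (x j * z i - x i * z j) * (y j * w i - y i * w j)) /
        ∏ i, ∏ j, (x i * w j + z i * y j) := by
  induction n with
  | zero => simp
  | succ n ih =>
    have hschur (i j : Fin n) :=
      inv_sub_div_mul_inv_cauchy (h i.succ 0) (h 0 j.succ) (h i.succ j.succ)
    have hscale (r c : Fin n → K) (N : Fin n → Fin n → K) :
        (Matrix.of fun i j => r i * (c j * N i j)).det =
          (∏ i, r i) * ((∏ j, c j) * (Matrix.of N).det) := by
      rw [← det_mul_row, ← det_mul_column]
      rfl
    rw [det_succ_eq_mul_det_sub_div _ (inv_ne_zero (h 0 0))]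
    simp only [of_apply, hschur]
    rw [hscale (fun i => (x i.succ * z 0 - x 0 * z i.succ) / (x i.succ * w 0 + z i.succ * y 0))
        (fun j => (y j.succ * w 0 - y 0 * w j.succ) / (x 0 * w j.succ + z 0 * y j.succ))
        (fun i j => (x i.succ * w j.succ + z i.succ * y j.succ)⁻¹),
      ih _ _ _ _ fun i j => h i.succ j.succ]
    simp only [Fin.prod_univ_succ (n := n), Fin.prod_Ioi_zero, Fin.prod_Ioi_succ, prod_mul_distrib,
      prod_inv_distrib, div_eq_mul_inv, mul_inv]
    ring

/-! ### The matrix with general exponents -/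

/-- `subInv x = x - x⁻¹`, the multiplicative form of `2 sinh`: `subInv (exp t) = 2 sinh t`. -/
def subInv {K : Type*} [Field K] (x : K) : K :=
  x - x⁻¹

section KuperbergMatrix

variable {K : Type*} [Field K] {ι κ : Type*}

theorem subInv_inv (x : K) : subInv x⁻¹ = -subInv x := by
  simp [subInv]

theorem ne_zero_of_injective_zpow {v : K}
    (hv : Function.Injective fun n : ℤ => v ^ n) : v ≠ 0 := by
  rintro rfl
  exact absurd (@hv 1 2 (by simp)) (by decide)

theorem subInv_zpow_ne_zero {v : K} (hv : Function.Injective fun n : ℤ => v ^ n) {n : ℤ}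
    (hn : n ≠ 0) : subInv (v ^ n) ≠ 0 := by
  rw [subInv, ← zpow_neg, sub_ne_zero]
  exact hv.ne (by omega)

theorem subInv_pow_add_two_div_subInv {x : K} (hx : subInv x ≠ 0) (k : ℕ) :
    subInv (x ^ (k + 2)) / subInv x =
      subInv (x ^ k) / subInv x + (x ^ (k + 1) + (x ^ (k + 1))⁻¹) := by
  have hx₀ : x ≠ 0 := by
    rintro rfl
    simp [subInv] at hx
  rw [div_add' _ _ _ hx]
  congr 1
  simp only [subInv]
  field_simp
  ring

theorem subInv_zpow_mul_subInv_zpow {x : K} (hx : x ≠ 0) (p q : ℤ) :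
    subInv (x ^ p) * subInv (x ^ q) =
      x ^ (p + q) + (x ^ (p + q))⁻¹ - (x ^ (q - p) + (x ^ (q - p))⁻¹) := by
  simp only [subInv, zpow_add₀ hx, zpow_sub₀ hx]
  field_simp
  ring

/-- The matrix of differences of ratios in Kuperberg's determinant, with arbitrary exponents in
place of the arithmetic progressions `a i = i`, `b j = j + m`. -/
def kuperbergMatrix (u v : K) (a : ι → ℕ) (b : κ → ℕ) : Matrix ι κ K :=
  Matrix.of fun i j =>
    subInv (u ^ (a i + b j : ℤ)) / subInv (v ^ (a i + b j : ℤ)) -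
      subInv (u ^ (b j - a i : ℤ)) / subInv (v ^ (b j - a i : ℤ))

/-- The polynomial form of `kuperbergMatrix u v a b`: the variable stands for `u ^ 2`, and row `i`
and column `j` are multiplied by `u ^ a i` and `u ^ b j` to clear the negative powers of `u`. -/
noncomputable def kuperbergPolyMatrix (v : K) (a : ι → ℕ) (b : κ → ℕ) : Matrix ι κ K[X] :=
  Matrix.of fun i j =>
    C (subInv (v ^ (a i + b j : ℤ)))⁻¹ * (X ^ (a i + b j) - 1) -
      C (subInv (v ^ (b j - a i : ℤ)))⁻¹ * (X ^ b j - X ^ a i)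

theorem map_eval_sq_kuperbergPolyMatrix [Fintype ι] [DecidableEq ι] [Fintype κ] [DecidableEq κ]
    {u : K} (hu : u ≠ 0) (v : K) (a : ι → ℕ) (b : κ → ℕ) :
    (kuperbergPolyMatrix v a b).map (eval (u ^ 2)) =
      diagonal (fun i => u ^ a i) * kuperbergMatrix u v a b * diagonal fun j => u ^ b j := by
  ext i j
  have hadd : (u ^ 2) ^ (a i + b j) - 1 = u ^ a i * u ^ b j * subInv (u ^ (a i + b j : ℤ)) := by
    simp only [subInv, zpow_add₀ hu, zpow_natCast]
    field_simp
    ring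
  have hsub : (u ^ 2) ^ b j - (u ^ 2) ^ a i =
      u ^ a i * u ^ b j * subInv (u ^ (b j - a i : ℤ)) := by
    simp only [subInv, zpow_sub₀ hu, zpow_natCast]
    field_simp
    ring
  simp only [kuperbergPolyMatrix, kuperbergMatrix, map_apply, of_apply, eval_sub, eval_mul, eval_C,
    eval_pow, eval_X, eval_one, hadd, hsub, mul_diagonal, diagonal_mul]
  ring

theorem kuperbergMatrix_inv (u v : K) (a : ι → ℕ) (b : κ → ℕ) :
    kuperbergMatrix u⁻¹ v a b = -kuperbergMatrix u v a b := by
  ext i j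
  simp only [kuperbergMatrix, inv_zpow, subInv_inv, of_apply, Matrix.neg_apply]
  ring

variable {v : K} (hv : Function.Injective fun n : ℤ => v ^ n) {a : ι → ℕ} {b : κ → ℕ}
  (hadd : ∀ i j, a i + b j ≠ 0) (hsub : ∀ i j, a i ≠ b j)

include hv hadd hsub

theorem kuperbergMatrix_pow_add_two (k : ℕ) :
    kuperbergMatrix (v ^ (k + 2)) v a b = kuperbergMatrix (v ^ k) v a b +
      vecMulVec (fun i => subInv ((v ^ (k + 1)) ^ (a i : ℤ)))
        fun j => subInv ((v ^ (k + 1)) ^ (b j : ℤ)) := by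
  have hrec {n : ℤ} (hn : n ≠ 0) : subInv ((v ^ (k + 2)) ^ n) / subInv (v ^ n) =
      subInv ((v ^ k) ^ n) / subInv (v ^ n) + ((v ^ (k + 1)) ^ n + ((v ^ (k + 1)) ^ n)⁻¹) := by
    simpa only [← zpow_natCast, zpow_comm _ n] using
      subInv_pow_add_two_div_subInv (subInv_zpow_ne_zero hv hn) k
  ext i j
  have hi : (a i + b j : ℤ) ≠ 0 := mod_cast hadd i j
  have hj : (b j - a i : ℤ) ≠ 0 := sub_ne_zero.mpr (mod_cast (hsub i j).symm)
  simp only [kuperbergMatrix, of_apply, Matrix.add_apply, vecMulVec_apply, hrec hi, hrec hj,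
    subInv_zpow_mul_subInv_zpow (pow_ne_zero (k + 1) (ne_zero_of_injective_zpow hv))]
  ring

theorem rank_kuperbergMatrix_pow_le [Finite ι] [Fintype κ] (k : ℕ) :
    (kuperbergMatrix (v ^ k) v a b).rank ≤ k / 2 := by
  induction k using Nat.twoStepInduction with
  | zero =>
    have hzero : kuperbergMatrix (v ^ 0) v a b = 0 := by
      ext i j
      simp [kuperbergMatrix, subInv]
    rw [hzero, rank_zero]
  | one =>
    have hzero : kuperbergMatrix (v ^ 1) v a b = 0 := by
      ext i j
      have hi : (a i + b j : ℤ) ≠ 0 := mod_cast hadd i j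
      have hj : (b j - a i : ℤ) ≠ 0 := sub_ne_zero.mpr (mod_cast (hsub i j).symm)
      simp [kuperbergMatrix, subInv_zpow_ne_zero hv hi, subInv_zpow_ne_zero hv hj]
    rw [hzero, rank_zero]
  | more k ih _ =>
    calc (kuperbergMatrix (v ^ (k + 2)) v a b).rank
        ≤ k / 2 + 1 := by
          rw [kuperbergMatrix_pow_add_two hv hadd hsub]
          exact (matrix_rank_add_le _ _).trans (add_le_add ih (rank_vecMulVec_le _ _))
      _ = (k + 2) / 2 := by omega

theorem rank_kuperbergMatrix_zpow_le [Finite ι] [Fintype κ] (k : ℤ) :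
    (kuperbergMatrix (v ^ k) v a b).rank ≤ k.natAbs / 2 := by
  obtain hk | hk := Int.natAbs_eq k
  · rw [hk, zpow_natCast, Int.natAbs_natCast]
    exact rank_kuperbergMatrix_pow_le hv hadd hsub _
  · rw [hk, zpow_neg, zpow_natCast, kuperbergMatrix_inv, Int.natAbs_neg,
      Int.natAbs_natCast, ← neg_one_smul K,
      rank_smul_of_mem_nonZeroDivisors _ (by simp)]
    exact rank_kuperbergMatrix_pow_le hv hadd hsub _

end KuperbergMatrix

theorem prod_X_sub_C_dvd_of_pow_card_dvd {α β K : Type*} [DecidableEq β] [Field K] {p : K[X]}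
    {r : β → K} (hr : Function.Injective r) (f : α → β) (s : Finset α)
    (h : ∀ k, (X - C (r k)) ^ #{x ∈ s | f x = k} ∣ p) : ∏ x ∈ s, (X - C (r (f x))) ∣ p := by
  rw [prod_comp (fun k => X - C (r k)) f]
  exact prod_dvd_of_coprime
    (fun k _ l _ hkl => ((pairwise_coprime_X_sub_C hr) hkl).pow) fun k _ => h k

theorem card_filter_sub_two_mul_le (m : ℕ) (k : ℤ) :
    #{p ∈ Icc 1 (2 * m + 1) ×ˢ Icc 1 m | (p.1 : ℤ) - 2 * p.2 = k} ≤ m - k.natAbs / 2 := by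
  calc #{p ∈ Icc 1 (2 * m + 1) ×ˢ Icc 1 m | (p.1 : ℤ) - 2 * p.2 = k}
      ≤ #(if 0 ≤ k then Icc 1 (m - k.natAbs / 2) else Icc (k.natAbs / 2 + 1) m) := by
        refine card_le_card_of_injOn Prod.snd (fun p hp => ?_) fun p hp q hq hpq => ?_
        · simp only [coe_filter, mem_product, mem_Icc, Set.mem_ofPred_eq] at hp
          split_ifs <;> simp only [coe_Icc, Set.mem_Icc] <;> omega
        · simp only [coe_filter, Set.mem_ofPred_eq] at hp hq
          exact Prod.ext (by omega) hpq
    _ ≤ m - k.natAbs / 2 := by split_ifs <;> simp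

theorem prod_Icc_prod_Icc_zpow_sub_two_mul {K : Type*} [Field K] {v : K} (hv : v ≠ 0) (m : ℕ) :
    ∏ i ∈ Icc 1 (2 * m + 1), ∏ j ∈ Icc 1 m, v ^ ((i : ℤ) - 2 * j) = 1 := by
  rw [← prod_product' _ _ fun i j : ℕ => v ^ ((i : ℤ) - 2 * j)]
  refine prod_involution (fun p _ => (2 * m + 2 - p.1, m + 1 - p.2)) (fun p hp => ?_)
    (fun p hp => ?_) (fun p hp => ?_) fun p hp => ?_
  all_goals simp only [mem_product, mem_Icc] at hp ⊢
  · rw [← zpow_add₀ hv, ← zpow_zero v]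
    congr 1
    omega
  · contrapose!
    intro hfix
    obtain ⟨h₁, h₂⟩ := Prod.ext_iff.mp hfix
    rw [← zpow_zero v]
    congr 1
    omega
  · omega
  · ext <;> simp only <;> omega

section KuperbergDet

variable {K : Type*} [Field K] {v : K} {ι : Type*} [Fintype ι] [DecidableEq ι] {a b : ι → ℕ}

theorem natDegree_det_kuperbergPolyMatrix_le :
    (kuperbergPolyMatrix v a b).det.natDegree ≤ ∑ i, a i + ∑ j, b j := by
  refine natDegree_det_le_sum_add_sum fun i j => ?_
  simp only [kuperbergPolyMatrix, of_apply]
  compute_degree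

theorem eval_zero_det_kuperbergPolyMatrix (ha : ∀ i, a i ≠ 0) (hb : ∀ j, b j ≠ 0) :
    (kuperbergPolyMatrix v a b).det.eval 0 =
      (-1) ^ Fintype.card ι * (Matrix.of fun i j => (subInv (v ^ (a i + b j : ℤ)))⁻¹).det := by
  rw [eval_det_eq_det_map_eval, ← det_neg]
  congr 1
  ext i j
  simp [kuperbergPolyMatrix, ha i, hb j]

variable (hv : Function.Injective fun n : ℤ => v ^ n)

include hv

theorem X_sub_C_pow_dvd_det_kuperbergPolyMatrix (hadd : ∀ i j, a i + b j ≠ 0)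
    (hsub : ∀ i j, a i ≠ b j) (k : ℤ) :
    (X - C ((v ^ k) ^ 2)) ^ (Fintype.card ι - k.natAbs / 2) ∣ (kuperbergPolyMatrix v a b).det := by
  have hrank : ((kuperbergPolyMatrix v a b).map (eval ((v ^ k) ^ 2))).rank ≤ k.natAbs / 2 := by
    rw [map_eval_sq_kuperbergPolyMatrix (zpow_ne_zero k (ne_zero_of_injective_zpow hv))]
    exact (rank_mul_le_left _ _).trans <| (rank_mul_le_right _ _).trans <|
      rank_kuperbergMatrix_zpow_le hv hadd hsub k
  exact (pow_dvd_pow _ (Nat.sub_le_sub_left hrank _)).trans (X_sub_C_pow_card_sub_rank_dvd_det _ _)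

theorem prod_X_sub_C_dvd_det_kuperbergPolyMatrix (hadd : ∀ i j, a i + b j ≠ 0)
    (hsub : ∀ i j, a i ≠ b j) :
    ∏ p ∈ Icc 1 (2 * Fintype.card ι + 1) ×ˢ Icc 1 (Fintype.card ι),
      (X - C ((v ^ ((p.1 : ℤ) - 2 * p.2)) ^ 2)) ∣ (kuperbergPolyMatrix v a b).det := by
  have hinj : Function.Injective fun k : ℤ => (v ^ k) ^ 2 := fun k l hkl => by
    have := @hv (k * 2) (l * 2) (by simpa [zpow_mul, zpow_ofNat] using hkl)
    omega
  exact prod_X_sub_C_dvd_of_pow_card_dvd hinj (fun p : ℕ × ℕ => (p.1 : ℤ) - 2 * p.2) _ fun k =>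
    (pow_dvd_pow _ (card_filter_sub_two_mul_le _ k)).trans
      (X_sub_C_pow_dvd_det_kuperbergPolyMatrix hv hadd hsub k)

theorem det_kuperbergPolyMatrix (ha : ∀ i, a i ≠ 0) (hb : ∀ j, b j ≠ 0) (hsub : ∀ i j, a i ≠ b j)
    (hsum : ∑ i, a i + ∑ j, b j = (2 * Fintype.card ι + 1) * Fintype.card ι) :
    (kuperbergPolyMatrix v a b).det =
      C (Matrix.of fun i j => (subInv (v ^ (a i + b j : ℤ)))⁻¹).det *
        ∏ i ∈ Icc 1 (2 * Fintype.card ι + 1), ∏ j ∈ Icc 1 (Fintype.card ι),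
          (X - C ((v ^ ((i : ℤ) - 2 * j)) ^ 2)) := by
  have hdvd := prod_X_sub_C_dvd_det_kuperbergPolyMatrix hv
    (fun i j => (Nat.add_pos_left (Nat.pos_of_ne_zero (ha i)) (b j)).ne') hsub
  have hmonic := monic_prod_X_sub_C (fun p : ℕ × ℕ => (v ^ ((p.1 : ℤ) - 2 * p.2)) ^ 2)
    (Icc 1 (2 * Fintype.card ι + 1) ×ˢ Icc 1 (Fintype.card ι))
  have hdeg := (natDegree_det_kuperbergPolyMatrix_le (v := v)).trans hsum.le
  have hdet := eq_leadingCoeff_mul_of_monic_of_dvd_of_natDegree_le hmonic hdvd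
    (hdeg.trans (by rw [natDegree_finsetProd_X_sub_C_eq_card]; simp))
  rw [prod_product] at hdet
  have hprod : ∏ i ∈ Icc 1 (2 * Fintype.card ι + 1), ∏ j ∈ Icc 1 (Fintype.card ι),
      (0 - (v ^ ((i : ℤ) - 2 * j)) ^ 2) = (-1) ^ Fintype.card ι := by
    simp only [zero_sub, neg_eq_neg_one_mul (_ ^ 2), prod_mul_distrib, prod_pow,
      prod_Icc_prod_Icc_zpow_sub_two_mul (ne_zero_of_injective_zpow hv)]
    simp [← pow_mul, pow_succ, ((even_two_mul _).mul_left _).neg_one_pow]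
  have hzero := congrArg (eval 0) hdet
  rw [eval_zero_det_kuperbergPolyMatrix ha hb] at hzero
  simp only [eval_mul, eval_C, eval_prod, eval_sub, eval_X, hprod] at hzero
  rw [mul_comm] at hzero
  rw [hdet, mul_right_cancel₀ (pow_ne_zero _ (neg_ne_zero.mpr one_ne_zero)) hzero]

theorem det_kuperbergMatrix {u : K} (hu : u ≠ 0) (ha : ∀ i, a i ≠ 0) (hb : ∀ j, b j ≠ 0)
    (hsub : ∀ i j, a i ≠ b j)
    (hsum : ∑ i, a i + ∑ j, b j = (2 * Fintype.card ι + 1) * Fintype.card ι) :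
    (kuperbergMatrix u v a b).det =
      (Matrix.of fun i j => (subInv (v ^ (a i + b j : ℤ)))⁻¹).det *
        ∏ i ∈ Icc 1 (2 * Fintype.card ι + 1), ∏ j ∈ Icc 1 (Fintype.card ι),
          subInv (u * v ^ (2 * j - i : ℤ)) := by
  have hpoly := congrArg (eval (u ^ 2)) (det_kuperbergPolyMatrix hv ha hb hsub hsum)
  have hfactor (k : ℤ) : u ^ 2 - (v ^ k) ^ 2 = u * v ^ k * subInv (u * v ^ (-k)) := by
    have := zpow_ne_zero k (ne_zero_of_injective_zpow hv)
    rw [subInv, zpow_neg]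
    field_simp
  have hscale : (∏ i, u ^ a i) * ∏ j, u ^ b j =
      ∏ _i ∈ Icc 1 (2 * Fintype.card ι + 1), ∏ _j ∈ Icc 1 (Fintype.card ι), u := by
    rw [prod_pow_eq_pow_sum, prod_pow_eq_pow_sum, ← pow_add, hsum]
    simp [← pow_mul, mul_comm]
  simp only [eval_det_eq_det_map_eval, map_eval_sq_kuperbergPolyMatrix hu, det_mul, det_diagonal,
    eval_mul, eval_C, eval_prod, eval_sub, eval_X, hfactor, prod_mul_distrib,
    prod_Icc_prod_Icc_zpow_sub_two_mul (ne_zero_of_injective_zpow hv), ← hscale, neg_sub,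
    mul_one] at hpoly
  have hne : (∏ i, u ^ a i) * ∏ j, u ^ b j ≠ 0 := by simp [prod_ne_zero_iff, hu]
  refine mul_left_cancel₀ hne ?_
  linear_combination hpoly

end KuperbergDet

/-! ### The arithmetic progressions `i` and `j + m` -/

theorem prod_fin_add_one {M : Type*} [CommMonoid M] (m : ℕ) (f : ℕ → M) :
    ∏ i : Fin m, f (i + 1) = ∏ i ∈ Icc 1 m, f i := by
  rw [Fin.prod_univ_eq_prod_range (fun i => f (i + 1)), range_eq_Ico, prod_Ico_add' f 0 m 1,
    zero_add, Ico_add_one_right_eq_Icc]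

theorem prod_fin_prod_Ioi_add_one {M : Type*} [CommMonoid M] (m : ℕ) (f : ℕ → ℕ → M) :
    ∏ i : Fin m, ∏ j ∈ Ioi i, f (i + 1) (j + 1) = ∏ j ∈ Icc 1 m, ∏ i ∈ Ico 1 j, f i j := by
  rw [prod_comm' (t' := univ) (s' := fun j => Iio j) (by simp), ← prod_fin_add_one]
  refine prod_congr rfl fun j _ => ?_
  rw [← zero_add 1, ← prod_Ico_add' (fun i => f i (j + (0 + 1))) 0 j 1, ← range_eq_Ico,
    ← Nat.Iio_eq_range, ← Fin.map_valEmbedding_Iio, prod_map]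
  rfl

theorem sum_fin_add_one_add_sum_fin_add_one_add (m c : ℕ) :
    ∑ i : Fin m, ((i : ℕ) + 1) + ∑ j : Fin m, ((j : ℕ) + 1 + c) = (m + 1 + c) * m := by
  induction m with
  | zero => simp
  | succ m ih =>
    simp only [Fin.sum_univ_castSucc, Fin.val_castSucc, Fin.val_last]
    linear_combination ih

theorem prod_Icc_add_prod_Ico_sub {M : Type*} [CommMonoid M] (n m : ℕ) (f : ℤ → M) :
    ∏ j ∈ Icc 1 (n + m), ∏ i ∈ Ico 1 j, f (j - i) =
      (∏ j ∈ Icc 1 n, ∏ i ∈ Ico 1 j, f (j - i)) * (∏ j ∈ Icc 1 m, ∏ i ∈ Ico 1 j, f (j - i)) *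
        ∏ i ∈ Icc 1 n, ∏ j ∈ Icc 1 m, f (n + j - i) := by
  induction m with
  | zero => simp
  | succ m ih =>
    have hrow : ∏ i ∈ Ico 1 (n + m + 1), f ((n + m + 1 : ℕ) - i) =
        (∏ i ∈ Icc 1 n, f (n + (m + 1 : ℕ) - i)) * ∏ i ∈ Ico 1 (m + 1), f ((m + 1 : ℕ) - i) := by
      rw [← prod_Ico_consecutive _ (show 1 ≤ n + 1 by omega) (show n + 1 ≤ n + m + 1 by omega),
        Ico_add_one_right_eq_Icc, show n + 1 = 1 + n by omega, show n + m + 1 = m + 1 + n by omega,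
        ← prod_Ico_add' (fun i : ℕ => f ((m + 1 + n : ℕ) - i))]
      congr 1 <;> refine prod_congr rfl fun i _ => congrArg f ?_ <;> push_cast <;> ring
    simp only [← add_assoc, prod_Icc_succ_top (Nat.le_add_left 1 _), ih, hrow, prod_mul_distrib]
    ac_rfl

theorem det_inv_subInv_zpow_add {K : Type*} [Field K] {v : K} (hv : v ≠ 0) {n : ℕ}
    (a b : Fin n → ℤ) (h : ∀ i j, subInv (v ^ (a i + b j)) ≠ 0) :
    (Matrix.of fun i j => (subInv (v ^ (a i + b j)))⁻¹).det =
      (∏ i, ∏ j ∈ Ioi i, subInv (v ^ (a j - a i)) * subInv (v ^ (b j - b i))) /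
        ∏ i, ∏ j, subInv (v ^ (a i + b j)) := by
  have hadd (p q : ℤ) : subInv (v ^ (p + q)) = v ^ p * v ^ q + v ^ (-p) * -v ^ (-q) := by
    rw [subInv, ← zpow_neg, neg_add, zpow_add₀ hv, zpow_add₀ hv]
    ring
  have hsub (p q : ℤ) : subInv (v ^ (q - p)) = v ^ q * v ^ (-p) - v ^ p * v ^ (-q) := by
    rw [sub_eq_add_neg, hadd, neg_neg]
    ring
  have hsub' (p q : ℤ) : subInv (v ^ (q - p)) = -v ^ (-q) * v ^ p - -v ^ (-p) * v ^ q := by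
    rw [hsub]
    ring
  simp only [hadd] at h ⊢
  rw [det_inv_cauchy _ _ _ _ h]
  simp only [← hsub, ← hsub']

theorem kuperberg_det_general {K : Type*} [Field K] (m : ℕ) {u v : K} (hu : u ≠ 0)
    (hv : Function.Injective fun n : ℤ => v ^ n) :
    (kuperbergMatrix u v (fun i : Fin m => i + 1) fun j : Fin m => j + 1 + m).det =
      (∏ j ∈ Icc 1 (2 * m), ∏ i ∈ Ico 1 j, subInv (v ^ (j - i : ℤ))) *
        (∏ i ∈ Icc 1 (2 * m + 1), ∏ j ∈ Icc 1 m, subInv (u * v ^ (2 * j - i : ℤ))) /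
        ∏ i ∈ Icc 1 m, ∏ j ∈ Icc 1 m,
          subInv (v ^ (m + j - i : ℤ)) * subInv (v ^ (m + j + i : ℤ)) := by
  have hnum : ∏ i : Fin m, ∏ j ∈ Ioi i, subInv (v ^ ((j + 1 : ℕ) - (i + 1 : ℕ) : ℤ)) *
      subInv (v ^ ((j + 1 + m : ℕ) - (i + 1 + m : ℕ) : ℤ)) =
      (∏ j ∈ Icc 1 m, ∏ i ∈ Ico 1 j, subInv (v ^ (j - i : ℤ))) *
        ∏ j ∈ Icc 1 m, ∏ i ∈ Ico 1 j, subInv (v ^ (j - i : ℤ)) := by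
    simp only [← prod_fin_prod_Ioi_add_one, ← prod_mul_distrib, Nat.cast_add _ m,
      add_sub_add_right_eq_sub]
  have hden : ∏ i : Fin m, ∏ j : Fin m, subInv (v ^ ((i + 1 : ℕ) + (j + 1 + m : ℕ) : ℤ)) =
      ∏ i ∈ Icc 1 m, ∏ j ∈ Icc 1 m, subInv (v ^ (m + j + i : ℤ)) := by
    simp only [← prod_fin_add_one]
    refine prod_congr rfl fun i _ => prod_congr rfl fun j _ => congrArg (fun k => subInv (v ^ k)) ?_
    push_cast
    ring
  have hsplit := prod_Icc_add_prod_Ico_sub m m fun k => subInv (v ^ k)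
  rw [← two_mul m] at hsplit
  have hne : ∏ i ∈ Icc 1 m, ∏ j ∈ Icc 1 m, subInv (v ^ (m + j - i : ℤ)) ≠ 0 := by
    simp only [prod_ne_zero_iff, mem_Icc]
    exact fun i hi j hj => subInv_zpow_ne_zero hv (by omega)
  rw [det_kuperbergMatrix hv hu (by simp) (by simp) (by omega)
      (by rw [sum_fin_add_one_add_sum_fin_add_one_add, Fintype.card_fin]; ring),
    det_inv_subInv_zpow_add (ne_zero_of_injective_zpow hv) _ _
      fun i j => subInv_zpow_ne_zero hv (by omega),
    Fintype.card_fin, hnum, hden, hsplit]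
  simp only [prod_mul_distrib]
  field_simp

theorem subInv_exp (t : ℝ) : subInv (Real.exp t) = 2 * Real.sinh t := by
  rw [subInv, ← Real.exp_neg, Real.sinh_eq]
  ring

/-- Kuperberg's determinant evaluation: for `m ≥ 1`, real `α`, `β` with `β ≠ 0`,
the determinant of the matrix
`U_{ij} = sinh(α(i+j+m)/2)/sinh(β(i+j+m)/2) − sinh(α(j−i+m)/2)/sinh(β(j−i+m)/2)`
(`1 ≤ i,j ≤ m`) is given by an explicit product of hyperbolic sines. -/
theorem kuperberg_det (m : ℕ) (hm : 1 ≤ m) (α β : ℝ) (hβ : β ≠ 0) :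
    Matrix.det (Matrix.of fun i j : Fin m =>
      Real.sinh (α * (((i : ℕ) + 1 : ℝ) + ((j : ℕ) + 1 : ℝ) + m) / 2) /
        Real.sinh (β * (((i : ℕ) + 1 : ℝ) + ((j : ℕ) + 1 : ℝ) + m) / 2) -
      Real.sinh (α * (((j : ℕ) + 1 : ℝ) - ((i : ℕ) + 1 : ℝ) + m) / 2) /
        Real.sinh (β * (((j : ℕ) + 1 : ℝ) - ((i : ℕ) + 1 : ℝ) + m) / 2)) =
    (∏ j ∈ Icc 1 (2 * m), ∏ i ∈ Ico 1 j, 2 * Real.sinh (β * ((j : ℝ) - (i : ℝ)) / 2)) *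
    (∏ i ∈ Icc 1 (2 * m + 1), ∏ j ∈ Icc 1 m,
      2 * Real.sinh ((α + β * (2 * (j : ℝ) - (i : ℝ))) / 2)) /
    (∏ i ∈ Icc 1 m, ∏ j ∈ Icc 1 m,
      4 * Real.sinh (β * ((m : ℝ) + (j : ℝ) - (i : ℝ)) / 2) *
        Real.sinh (β * ((m : ℝ) + (j : ℝ) + (i : ℝ)) / 2)) := by
  have hv : Function.Injective fun n : ℤ => Real.exp (β / 2) ^ n :=
    zpow_right_injective₀ (Real.exp_pos _) (by simpa using hβ)
  have hdet := kuperberg_det_general m (Real.exp_ne_zero (α / 2)) hv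
  simp only [kuperbergMatrix, ← Real.rpow_intCast, ← Real.exp_mul, ← Real.exp_add, subInv_exp,
    mul_div_mul_left _ _ (two_ne_zero' ℝ)] at hdet
  have hfour (x y : ℝ) : 4 * x * y = 2 * x * (2 * y) := by ring
  simp only [hfour]
  convert hdet using 8
  · rfl
  all_goals
    push_cast
    ring
end

section
/- Let m ≥ 1. Define g : {(x,y) ∈ ℝ² : x+y ≠ 0, x ≥ y} → ℝ (extended to x < y by symmetry of the formula) by g(x,y) = sinh((x+y)/2)/sinh(3(x+y)/2) − sinh((x−y)/2)/sinh(3(x−y)/2) when x ≠ y, and g(x,x) = sinh(x)/sinh(3x) − 1/3 when x = y ≠ 0. For real vectors x = (x_1,...,x_m), y = (y_1,...,y_m) with 0 < x_1 < ... < x_m and 0 < y_1 < ... < y_m, set G̃(x,y) = det_m[g(x_j,y_k)] / (∏_{k=1}^m x_k·y_k · ∏_{1≤i<j≤m} (x_j²−x_i²)(y_j²−y_i²)). Then G̃(x,y) tends, as (x,y) → (0,0) within this domain, to the limit L_m = [∏_{1≤i<j≤2m} 3(j−i)] · [∏_{i=1}^{2m+1} ∏_{j=1}^{m} (1+3(2j−i))]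 / [(2m)! · ∏_{1≤i<j≤m}(j²−i²) · ∏_{m+1≤i<j≤2m}(j²−i²) · ∏_{i=1}^{m}∏_{j=1}^{m} 9(m+j−i)(m+j+i)]. -/
open Finset Filter

open scoped Classical in
/-- The kernel `g(x,y) = sinh((x+y)/2)/sinh(3(x+y)/2) − sinh((x−y)/2)/sinh(3(x−y)/2)`
with the continuous extension `g(x,x) = sinh(x)/sinh(3x) − 1/3` on the diagonal. -/
noncomputable def gKer (x y : ℝ) : ℝ :=
  if x = y then Real.sinh x / Real.sinh (3 * x) - 1 / 3
  else Real.sinh ((x + y) / 2) / Real.sinh (3 * (x + y) / 2) -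
       Real.sinh ((x - y) / 2) / Real.sinh (3 * (x - y) / 2)

/-
Write `g(x, y) = x y ∑ c i j x ^ (2 i) y ^ (2 j)`. Replacing function values by Newton divided
differences in both families of nodes `x_k ^ 2`, `y_k ^ 2` multiplies the determinant by
Vandermonde determinants, and when the nodes collapse the divided differences tend to the Taylor
coefficients; so the limit is `det (c i j)`. The generating function of the Bernoulli polynomials
shows that, up to rescaling rows and columns, `c i j` is the value at `2 / 3` of
`B_N / N` with `N = 2 i + 2 j + 3`.

The Hankel determinant of these polynomials factors completely: at `x = (k + 1) / 2` with `k : ℤ`,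
telescoping `B_N (x + 1) - B_N x = N x ^ (N - 1)` down to a zero of `B_N` turns the matrix into a
sum of `⌊|k| / 2⌋` matrices of rank one, so the determinant has a zero there whose order is at least
the corank. These zeros exhaust the degree `m (2 m + 1)`, and the leading coefficient is a Cauchy
determinant.
-/

section NewtonInterpolation

open Polynomial

variable {R : Type*} [CommRing R]

/-- The Newton basis polynomial `∏ l < j, (X - s l)` of the nodes `s`. -/
noncomputable def newtonBasis (s : ℕ → R) (j : ℕ) : R[X] :=
  ∏ l ∈ range j, (X - C (s l))

/-- The coefficient of `newtonBasis s j` in the expansion of `X ^ n`, that is the complete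
homogeneous symmetric polynomial of degree `n - j` in `s 0, …, s j`. -/
def newtonCoeff (s : ℕ → R) : ℕ → ℕ → R
  | 0, 0 => 1
  | 0, _ + 1 => 0
  | n + 1, 0 => s 0 * newtonCoeff s n 0
  | n + 1, j + 1 => newtonCoeff s n j + s (j + 1) * newtonCoeff s n (j + 1)

lemma newtonBasis_succ (s : ℕ → R) (j : ℕ) :
    newtonBasis s (j + 1) = newtonBasis s j * (X - C (s j)) :=
  prod_range_succ _ _

lemma eval_newtonBasis_eq_zero (s : ℕ → R) {i j : ℕ} (hij : i < j) :
    (newtonBasis s j).eval (s i) = 0 := by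
  rw [newtonBasis, eval_prod]
  exact prod_eq_zero (mem_range.2 hij) (by simp)

lemma sum_newtonCoeff_succ_mul_newtonBasis (s : ℕ → R) (n m : ℕ) :
    ∑ j ∈ range (m + 1), C (newtonCoeff s (n + 1) j) * newtonBasis s j +
        C (newtonCoeff s n m) * newtonBasis s (m + 1) =
      X * ∑ j ∈ range (m + 1), C (newtonCoeff s n j) * newtonBasis s j := by
  induction m with
  | zero =>
    simp only [zero_add, sum_range_one, newtonCoeff, newtonBasis_succ, C_mul]
    ring
  | succ m ih =>
    rw [sum_range_succ, sum_range_succ _ (m + 1), newtonBasis_succ s (m + 1), newtonCoeff, C_add,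
      C_mul]
    linear_combination ih

lemma pow_eq_sum_newtonCoeff (s : ℕ → R) {i m : ℕ} (hi : i < m) (n : ℕ) :
    s i ^ n = ∑ j ∈ range m, newtonCoeff s n j * (newtonBasis s j).eval (s i) := by
  obtain ⟨m, rfl⟩ := Nat.exists_eq_add_one_of_ne_zero (Nat.ne_zero_of_lt hi)
  induction n with
  | zero => simp [sum_range_succ', newtonCoeff, newtonBasis]
  | succ n ih =>
    have h := congrArg (eval (s i)) (sum_newtonCoeff_succ_mul_newtonBasis s n m)
    simp only [eval_add, eval_mul, eval_C, eval_X, eval_finsetSum,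
      eval_newtonBasis_eq_zero s hi, mul_zero, add_zero] at h
    rw [pow_succ', ih, h]

lemma det_eval_newtonBasis [Nontrivial R] (s : ℕ → R) (m : ℕ) :
    (Matrix.of fun i j : Fin m => (newtonBasis s j).eval (s i)).det =
      (Matrix.vandermonde fun i : Fin m => s i).det :=
  (Matrix.det_eval_matrixOfPolynomials_eq_det_vandermonde _ _
    (fun j => by simp [natDegree_prod_of_monic, monic_X_sub_C])
    fun _ => monic_prod_of_monic _ _ fun _ _ => monic_X_sub_C _).symm

lemma newtonCoeff_zero (n j : ℕ) :
    newtonCoeff (0 : ℕ → R) n j = if n = j then 1 else 0 := by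
  induction n generalizing j with
  | zero => cases j <;> simp [newtonCoeff]
  | succ n ih => cases j <;> simp [newtonCoeff, ih]

lemma continuous_newtonCoeff [TopologicalSpace R] [IsTopologicalRing R] (n j : ℕ) :
    Continuous fun s : ℕ → R => newtonCoeff s n j := by
  induction n generalizing j with
  | zero => cases j <;> exact continuous_const
  | succ n ih =>
    cases j with
    | zero => exact (continuous_apply 0).mul (ih 0)
    | succ j => exact (ih j).add ((continuous_apply (j + 1)).mul (ih (j + 1)))

end NewtonInterpolation

section ConfluentLimit

open scoped Topology

variable {𝕜 α : Type*} [NormedField 𝕜] {c : ℕ → ℕ → 𝕜} {ρ : ℝ} {l : Filter α} {m : ℕ}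

/-- The sum of the double power series with coefficients `c`. -/
noncomputable def doubleSeries (c : ℕ → ℕ → 𝕜) (z w : 𝕜) : 𝕜 :=
  ∑' q : ℕ × ℕ, c q.1 q.2 * z ^ q.1 * w ^ q.2

/-- The matrix of `doubleSeries c` in the Newton bases of the nodes `s` and `t`. -/
noncomputable def newtonKernel (c : ℕ → ℕ → 𝕜) (s t : ℕ → 𝕜) (j k : ℕ) : 𝕜 :=
  ∑' q : ℕ × ℕ, c q.1 q.2 * newtonCoeff s q.1 j * newtonCoeff t q.2 k

-- The radius `ρ / 2` leaves the room that the recursion for `newtonCoeff` needs.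
lemma norm_newtonCoeff_le (hρ : 0 < ρ) {s : ℕ → 𝕜} (hs : ∀ j, ‖s j‖ ≤ ρ / 2) (n j : ℕ) :
    ‖newtonCoeff s n j‖ ≤ (2 / ρ) ^ j * ρ ^ n := by
  have norm_node_mul_le (n j : ℕ) (ih : ‖newtonCoeff s n j‖ ≤ (2 / ρ) ^ j * ρ ^ n) :
      ‖s j * newtonCoeff s n j‖ ≤ ρ / 2 * ((2 / ρ) ^ j * ρ ^ n) :=
    norm_mul_le_of_le (hs j) ih
  induction n generalizing j with
  | zero =>
    cases j with
    | zero => simp [newtonCoeff]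
    | succ j =>
      rw [newtonCoeff, norm_zero]
      positivity
  | succ n ih =>
    cases j with
    | zero =>
      refine (norm_node_mul_le n 0 (ih 0)).trans ?_
      rw [pow_succ', ← mul_left_comm]
      gcongr
      exact half_le_self hρ.le
    | succ j =>
      refine (norm_add_le_of_le (ih j) (norm_node_mul_le n (j + 1) (ih (j + 1)))).trans_eq ?_
      have hρ' : 2 / ρ * ρ = 2 := div_mul_cancel₀ 2 hρ.ne'
      rw [pow_succ (2 / ρ), pow_succ ρ]
      linear_combination (-1 / 2 * (2 / ρ) ^ j * ρ ^ n) * hρ'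

lemma norm_mul_newtonCoeff_mul_newtonCoeff_le (hρ : 0 < ρ) {s t : ℕ → 𝕜}
    (hs : ∀ j, ‖s j‖ ≤ ρ / 2) (ht : ∀ j, ‖t j‖ ≤ ρ / 2) (j k : ℕ) (q : ℕ × ℕ) :
    ‖c q.1 q.2 * newtonCoeff s q.1 j * newtonCoeff t q.2 k‖ ≤
      (2 / ρ) ^ j * (2 / ρ) ^ k * (‖c q.1 q.2‖ * ρ ^ q.1 * ρ ^ q.2) :=
  calc ‖c q.1 q.2 * newtonCoeff s q.1 j * newtonCoeff t q.2 k‖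
      ≤ ‖c q.1 q.2‖ * ((2 / ρ) ^ j * ρ ^ q.1) * ((2 / ρ) ^ k * ρ ^ q.2) := by
        rw [norm_mul, norm_mul]
        gcongr
        exacts [norm_newtonCoeff_le hρ hs _ _, norm_newtonCoeff_le hρ ht _ _]
    _ = (2 / ρ) ^ j * (2 / ρ) ^ k * (‖c q.1 q.2‖ * ρ ^ q.1 * ρ ^ q.2) := by ring

lemma newtonKernel_zero (c : ℕ → ℕ → 𝕜) (j k : ℕ) : newtonKernel c 0 0 j k = c j k := by
  rw [newtonKernel, tsum_eq_single (j, k)]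
  · simp [newtonCoeff_zero]
  · rintro ⟨a, b⟩ hab
    simp only [newtonCoeff_zero]
    grind

variable [CompleteSpace 𝕜]

lemma summable_newtonKernel (hρ : 0 < ρ)
    (hc : Summable fun q : ℕ × ℕ => ‖c q.1 q.2‖ * ρ ^ q.1 * ρ ^ q.2) {s t : ℕ → 𝕜}
    (hs : ∀ j, ‖s j‖ ≤ ρ / 2) (ht : ∀ j, ‖t j‖ ≤ ρ / 2) (j k : ℕ) :
    Summable fun q : ℕ × ℕ => c q.1 q.2 * newtonCoeff s q.1 j * newtonCoeff t q.2 k :=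
  .of_norm_bounded (hc.mul_left _) (norm_mul_newtonCoeff_mul_newtonCoeff_le hρ hs ht j k)

lemma tendsto_newtonKernel (hρ : 0 < ρ)
    (hc : Summable fun q : ℕ × ℕ => ‖c q.1 q.2‖ * ρ ^ q.1 * ρ ^ q.2) {s t : α → ℕ → 𝕜}
    (hs : Tendsto s l (𝓝 0)) (ht : Tendsto t l (𝓝 0)) (hs' : ∀ᶠ a in l, ∀ j, ‖s a j‖ ≤ ρ / 2)
    (ht' : ∀ᶠ a in l, ∀ j, ‖t a j‖ ≤ ρ / 2) (j k : ℕ) :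
    Tendsto (fun a => newtonKernel c (s a) (t a) j k) l (𝓝 (c j k)) := by
  rw [← newtonKernel_zero c]
  refine tendsto_tsum_of_dominated_convergence (hc.mul_left ((2 / ρ) ^ j * (2 / ρ) ^ k))
    (fun q => ?_) ?_
  · exact ((((continuous_newtonCoeff q.1 j).tendsto 0).comp hs).const_mul _).mul
      (((continuous_newtonCoeff q.2 k).tendsto 0).comp ht)
  · filter_upwards [hs', ht'] with a hsa hta
    exact norm_mul_newtonCoeff_mul_newtonCoeff_le hρ hsa hta j k

lemma doubleSeries_eq_sum_newtonKernel (hρ : 0 < ρ)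
    (hc : Summable fun q : ℕ × ℕ => ‖c q.1 q.2‖ * ρ ^ q.1 * ρ ^ q.2) {s t : ℕ → 𝕜}
    (hs : ∀ j, ‖s j‖ ≤ ρ / 2) (ht : ∀ j, ‖t j‖ ≤ ρ / 2) {i k : ℕ} (hi : i < m) (hk : k < m) :
    doubleSeries c (s i) (t k) =
      ∑ b ∈ range m, ∑ a ∈ range m, (newtonBasis s a).eval (s i) * newtonKernel c s t a b *
        (newtonBasis t b).eval (t k) := by
  have hsum := hasSum_sum (s := range m) fun b _ => hasSum_sum (s := range m) fun a _ =>
    ((summable_newtonKernel hρ hc hs ht a b).hasSum.mul_left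
      ((newtonBasis s a).eval (s i))).mul_right ((newtonBasis t b).eval (t k))
  refine Eq.trans (tsum_congr fun q => ?_) hsum.tsum_eq
  rw [pow_eq_sum_newtonCoeff s hi, pow_eq_sum_newtonCoeff t hk, mul_sum]
  simp only [mul_sum, sum_mul]
  exact sum_congr rfl fun b _ => sum_congr rfl fun a _ => by ring

lemma det_doubleSeries_eq_det_vandermonde_mul (hρ : 0 < ρ)
    (hc : Summable fun q : ℕ × ℕ => ‖c q.1 q.2‖ * ρ ^ q.1 * ρ ^ q.2) {s t : ℕ → 𝕜}
    (hs : ∀ j, ‖s j‖ ≤ ρ / 2) (ht : ∀ j, ‖t j‖ ≤ ρ / 2) (m : ℕ) :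
    (Matrix.of fun i k : Fin m => doubleSeries c (s i) (t k)).det =
      (Matrix.vandermonde fun i : Fin m => s i).det *
          (Matrix.vandermonde fun i : Fin m => t i).det *
        (Matrix.of fun j k : Fin m => newtonKernel c s t j k).det := by
  have hfactor : (Matrix.of fun i k : Fin m => doubleSeries c (s i) (t k)) =
      (Matrix.of fun i j : Fin m => (newtonBasis s j).eval (s i)) *
        (Matrix.of fun j k : Fin m => newtonKernel c s t j k) *
        (Matrix.of fun i j : Fin m => (newtonBasis t j).eval (t i)).transpose := by
    ext i k
    simp only [Matrix.mul_apply, Matrix.of_apply, Matrix.transpose_apply, sum_mul]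
    rw [doubleSeries_eq_sum_newtonKernel hρ hc hs ht i.2 k.2]
    simp only [sum_range]
  rw [hfactor, Matrix.det_mul, Matrix.det_mul, Matrix.det_transpose, det_eval_newtonBasis,
    det_eval_newtonBasis]
  ring

theorem tendsto_det_doubleSeries_div_det_vandermonde (hρ : 0 < ρ)
    (hc : Summable fun q : ℕ × ℕ => ‖c q.1 q.2‖ * ρ ^ q.1 * ρ ^ q.2) {s t : α → Fin m → 𝕜}
    (hs : Tendsto s l (𝓝 0)) (ht : Tendsto t l (𝓝 0))
    (hs_inj : ∀ᶠ a in l, (s a).Injective) (ht_inj : ∀ᶠ a in l, (t a).Injective) :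
    Tendsto (fun a => (Matrix.of fun i k => doubleSeries c (s a i) (t a k)).det /
        ((Matrix.vandermonde (s a)).det * (Matrix.vandermonde (t a)).det)) l
      (𝓝 (Matrix.of fun i j : Fin m => c i j).det) := by
  obtain _ | m := m
  · simpa using tendsto_const_nhds
  have tendsto_cyclic {u : α → Fin (m + 1) → 𝕜} (hu : Tendsto u l (𝓝 0)) :
      Tendsto (fun a (j : ℕ) => u a (Fin.ofNat (m + 1) j)) l (𝓝 0) :=
    tendsto_pi_nhds.2 fun j => tendsto_pi_nhds.1 hu _
  have eventually_le {u : α → Fin (m + 1) → 𝕜} (hu : Tendsto u l (𝓝 0)) :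
      ∀ᶠ a in l, ∀ j : ℕ, ‖u a (Fin.ofNat (m + 1) j)‖ ≤ ρ / 2 := by
    filter_upwards [hu.norm.eventually_le_const (u := ρ / 2) (by simpa using hρ)] with a ha j
    exact (norm_le_pi_norm _ _).trans ha
  have hdet := ((continuous_id (X := Matrix (Fin (m + 1)) (Fin (m + 1)) 𝕜)).matrix_det.tendsto
    (Matrix.of fun i j => c i j)).comp <| tendsto_pi_nhds.2 fun j => tendsto_pi_nhds.2 fun k =>
      tendsto_newtonKernel hρ hc (tendsto_cyclic hs) (tendsto_cyclic ht) (eventually_le hs)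
        (eventually_le ht) j k
  refine hdet.congr' ?_
  filter_upwards [eventually_le hs, eventually_le ht, hs_inj, ht_inj] with a hsa hta hs_inj ht_inj
  have h := det_doubleSeries_eq_det_vandermonde_mul hρ hc hsa hta (m + 1)
  simp only [Fin.ofNat_eq_cast, Fin.cast_val_eq_self] at h
  rw [h, mul_div_cancel_left₀ _ (mul_ne_zero (Matrix.det_vandermonde_ne_zero_iff.2 hs_inj)
    (Matrix.det_vandermonde_ne_zero_iff.2 ht_inj))]
  rfl

end ConfluentLimit

section EvenSeries

lemma sum_range_two_mul {M : Type*} [AddCommMonoid M] (f : ℕ → M) (n : ℕ) :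
    ∑ k ∈ range (2 * n), f k = ∑ k ∈ range n, (f (2 * k) + f (2 * k + 1)) := by
  induction n with
  | zero => simp
  | succ n ih => rw [mul_add_one, sum_range_succ, sum_range_succ, ih, sum_range_succ, add_assoc]

lemma add_pow_sub_sub_pow {R : Type*} [CommRing R] (x y : R) (n : ℕ) :
    (x + y) ^ (2 * (n + 1)) - (x - y) ^ (2 * (n + 1)) =
      ∑ p ∈ antidiagonal n, 2 * ((2 * (n + 1)).choose (2 * p.1 + 1) : R) *
        x ^ (2 * p.1 + 1) * y ^ (2 * p.2 + 1) := by
  rw [sub_eq_add_neg x y, add_pow, add_pow, ← sum_sub_distrib, sum_range_succ, sum_range_two_mul,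
    Nat.sum_antidiagonal_eq_sum_range_succ
      (fun i j => 2 * ((2 * (n + 1)).choose (2 * i + 1) : R) * x ^ (2 * i + 1) * y ^ (2 * j + 1))]
  simp only [Nat.sub_self, pow_zero, sub_self, add_zero]
  refine sum_congr rfl fun k hk => ?_
  have hkn : k ≤ n := mem_range_succ_iff.1 hk
  have even_sub : 2 * (n + 1) - 2 * k = 2 * (n + 1 - k) := by lia
  have odd_sub : 2 * (n + 1) - (2 * k + 1) = 2 * (n - k) + 1 := by lia
  rw [even_sub, odd_sub, (even_two_mul _).neg_pow, (odd_two_mul_add_one _).neg_pow]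
  ring

variable {𝕜 : Type*} [NormedField 𝕜] {b : ℕ → 𝕜} {r : ℝ}

/-- The coefficients of `(f (x + y) - f (x - y)) / (x * y)` as a double power series in `x ^ 2` and
`y ^ 2`, where `f u = ∑ n, b n * u ^ (2 * n)`. -/
def evenDiffCoeff {R : Type*} [CommRing R] (b : ℕ → R) (i j : ℕ) : R :=
  2 * ((2 * (i + j + 1)).choose (2 * i + 1) : R) * b (i + j + 1)

lemma sum_evenDiffCoeff_mul {R : Type*} [CommRing R] (b : ℕ → R) (x y : R) (n : ℕ) :
    ∑ p ∈ antidiagonal n, x * y * (evenDiffCoeff b p.1 p.2 * (x ^ 2) ^ p.1 * (y ^ 2) ^ p.2) =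
      b (n + 1) * (x + y) ^ (2 * (n + 1)) - b (n + 1) * (x - y) ^ (2 * (n + 1)) := by
  rw [← mul_sub, add_pow_sub_sub_pow, mul_sum]
  refine sum_congr rfl fun p hp => ?_
  obtain rfl := mem_antidiagonal.1 hp
  rw [evenDiffCoeff]
  ring

lemma norm_evenDiffCoeff_le (b : ℕ → 𝕜) (i j : ℕ) :
    ‖evenDiffCoeff b i j‖ ≤ evenDiffCoeff (fun n => ‖b n‖) i j := by
  have h := Nat.norm_cast_le (α := 𝕜) (2 * (2 * (i + j + 1)).choose (2 * i + 1))
  rw [norm_one, mul_one] at h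
  rw [evenDiffCoeff, evenDiffCoeff, norm_mul]
  gcongr
  exact_mod_cast h

lemma summable_norm_evenDiffCoeff_mul (hr : 0 < r)
    (hb : Summable fun n => ‖b n‖ * (2 * r) ^ (2 * n)) :
    Summable fun q : ℕ × ℕ => ‖evenDiffCoeff b q.1 q.2‖ * (r ^ 2) ^ q.1 * (r ^ 2) ^ q.2 := by
  have hnonneg (i j : ℕ) : 0 ≤ evenDiffCoeff (fun n => ‖b n‖) i j := by
    rw [evenDiffCoeff]
    positivity
  suffices Summable fun q : ℕ × ℕ =>
      r * r * (evenDiffCoeff (fun n => ‖b n‖) q.1 q.2 * (r ^ 2) ^ q.1 * (r ^ 2) ^ q.2) by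
    refine .of_nonneg_of_le (fun q => by positivity) (fun q => ?_)
      ((summable_mul_left_iff (mul_pos hr hr).ne').1 this)
    gcongr
    exact norm_evenDiffCoeff_le b _ _
  rw [← Finset.HasAntidiagonal.sigmaAntidiagonalEquivProd.summable_iff]
  refine (summable_sigma_of_nonneg fun x => ?_).2 ⟨fun n => (hasSum_fintype _).summable, ?_⟩
  · have := hnonneg x.2.1.1 x.2.1.2
    simp only [Function.comp_apply, HasAntidiagonal.sigmaAntidiagonalEquivProd_apply]
    positivity
  · simp only [Function.comp_apply, HasAntidiagonal.sigmaAntidiagonalEquivProd_apply, tsum_fintype]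
    refine ((summable_nat_add_iff 1).2 hb).congr fun n => ?_
    rw [sum_coe_sort (antidiagonal n) fun p => r * r * (evenDiffCoeff (fun n => ‖b n‖) p.1 p.2 *
      (r ^ 2) ^ p.1 * (r ^ 2) ^ p.2), sum_evenDiffCoeff_mul]
    simp [two_mul]

lemma mul_doubleSeries_evenDiffCoeff [CompleteSpace 𝕜] (hr : 0 < r)
    (hb : Summable fun n => ‖b n‖ * (2 * r) ^ (2 * n)) {f : 𝕜 → 𝕜} {x y : 𝕜} (hx : ‖x‖ ≤ r)
    (hy : ‖y‖ ≤ r) (hadd : HasSum (fun n => b n * (x + y) ^ (2 * n)) (f (x + y)))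
    (hsub : HasSum (fun n => b n * (x - y) ^ (2 * n)) (f (x - y))) :
    x * y * doubleSeries (evenDiffCoeff b) (x ^ 2) (y ^ 2) = f (x + y) - f (x - y) := by
  have hsum : Summable fun q : ℕ × ℕ =>
      evenDiffCoeff b q.1 q.2 * (x ^ 2) ^ q.1 * (y ^ 2) ^ q.2 := by
    refine .of_norm_bounded (summable_norm_evenDiffCoeff_mul hr hb) fun q => ?_
    rw [norm_mul, norm_mul, norm_pow, norm_pow, norm_pow, norm_pow]
    gcongr
  have hanti := ((Finset.HasAntidiagonal.sigmaAntidiagonalEquivProd (A := ℕ)).hasSum_iff.2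
    (hsum.hasSum.mul_left (x * y))).sigma fun n => hasSum_fintype _
  refine hanti.unique ?_
  have hdiff := (hasSum_nat_add_iff' 1).2 (hadd.sub hsub)
  simp only [range_one, sum_singleton, mul_zero, pow_zero, sub_self, sub_zero] at hdiff
  refine hdiff.congr_fun fun n => ?_
  exact (sum_coe_sort (antidiagonal n) fun p => x * y * (evenDiffCoeff b p.1 p.2 * (x ^ 2) ^ p.1 *
    (y ^ 2) ^ p.2)).trans (sum_evenDiffCoeff_mul b x y n)

end EvenSeries

section BernoulliGeneratingFunction

open Nat Real

lemma tsum_coeff_mul_pow_mul_tsum_coeff_mul_pow {R : Type*} [NormedCommRing R] [CompleteSpace R]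
    {P Q : PowerSeries R} {w : R} (hP : Summable fun n => ‖P.coeff n * w ^ n‖)
    (hQ : Summable fun n => ‖Q.coeff n * w ^ n‖) :
    (∑' n, P.coeff n * w ^ n) * ∑' n, Q.coeff n * w ^ n = ∑' n, (P * Q).coeff n * w ^ n := by
  rw [tsum_mul_tsum_eq_tsum_sum_antidiagonal_of_summable_norm hP hQ]
  refine tsum_congr fun n => ?_
  rw [PowerSeries.coeff_mul, sum_mul]
  refine sum_congr rfl fun p hp => ?_
  rw [← mem_antidiagonal.1 hp, pow_add]
  ring

lemma exists_abs_bernoulliFun_div_factorial_le {x : ℝ} (hx : x ∈ Set.Icc 0 1) :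
    ∃ K, ∀ k, 2 ≤ k → |bernoulliFun k x| / k ! ≤ K / (2 * π) ^ k := by
  refine ⟨∑' n : ℤ, ‖1 / (n : ℂ) ^ 2‖, fun k hk => ?_⟩
  have hsum : Summable fun n : ℤ => ‖1 / (n : ℂ) ^ 2‖ := by
    simpa using summable_one_div_int_pow.2 one_lt_two
  have hle (n : ℤ) : ‖1 / (n : ℂ) ^ k * fourier n (x : AddCircle (1 : ℝ))‖ ≤
      ‖1 / (n : ℂ) ^ 2‖ := by
    rw [norm_mul, fourier_apply, Circle.norm_coe, mul_one, norm_div, norm_div, norm_pow, norm_pow]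
    obtain rfl | hn := eq_or_ne n 0
    · simp [(two_pos.trans_le hk).ne']
    · have : 1 ≤ ‖(n : ℂ)‖ := by
        rw [Complex.norm_intCast]
        exact_mod_cast Int.one_le_abs hn
      gcongr
  have h := tsum_of_norm_bounded hsum.hasSum hle
  rw [(hasSum_one_div_pow_mul_fourier_mul_bernoulliFun hk hx).tsum_eq] at h
  rw [le_div_iff₀ (by positivity)]
  refine le_of_eq_of_le ?_ h
  simp [abs_of_pos pi_pos]
  ring

lemma summable_bernoulliFun_div_factorial_mul_pow {x w : ℝ} (hx : x ∈ Set.Icc 0 1)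
    (hw : |w| < 2 * π) : Summable fun k => bernoulliFun k x / k ! * w ^ k := by
  obtain ⟨K, hK⟩ := exists_abs_bernoulliFun_div_factorial_le hx
  have hgeom : Summable fun k => K * (|w| / (2 * π)) ^ k :=
    (summable_geometric_of_lt_one (by positivity) ((div_lt_one two_pi_pos).2 hw)).mul_left K
  refine (summable_nat_add_iff 2).1 (.of_norm_bounded ((summable_nat_add_iff 2).2 hgeom)
    fun k => ?_)
  rw [norm_mul, norm_div, norm_pow, norm_eq_abs, norm_eq_abs, Nat.abs_cast, norm_eq_abs]
  calc |bernoulliFun (k + 2) x| / (k + 2)! * |w| ^ (k + 2)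
      ≤ K / (2 * π) ^ (k + 2) * |w| ^ (k + 2) :=
        mul_le_mul_of_nonneg_right (hK (k + 2) (Nat.le_add_left 2 k)) (by positivity)
    _ = K * (|w| / (2 * π)) ^ (k + 2) := by rw [div_pow]; ring

lemma hasSum_coeff_exp_sub_one_mul_pow (w : ℝ) :
    HasSum (fun n => (PowerSeries.exp ℝ - 1).coeff n * w ^ n) (exp w - 1) := by
  have hexp := NormedSpace.expSeries_div_hasSum_exp w
  rw [← exp_eq_exp_ℝ] at hexp
  refine (hexp.sub (hasSum_ite_eq 0 1)).congr_fun fun n => ?_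
  rw [map_sub, PowerSeries.coeff_exp, PowerSeries.coeff_one]
  obtain rfl | hn := eq_or_ne n 0
  · simp
  · simp [hn, div_eq_inv_mul]

lemma hasSum_coeff_X_mul_rescale_exp_mul_pow (x w : ℝ) :
    HasSum (fun n => (PowerSeries.X * PowerSeries.rescale x (PowerSeries.exp ℝ)).coeff n * w ^ n)
      (w * exp (x * w)) := by
  have hexp := NormedSpace.expSeries_div_hasSum_exp (x * w)
  rw [← exp_eq_exp_ℝ] at hexp
  refine (hasSum_nat_add_iff' 1).1 ?_
  simp only [range_one, sum_singleton, PowerSeries.coeff_zero_X_mul, zero_mul, sub_zero]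
  refine (hexp.mul_left w).congr_fun fun n => ?_
  rw [PowerSeries.coeff_succ_X_mul, PowerSeries.coeff_rescale, PowerSeries.coeff_exp, mul_pow,
    eq_ratCast]
  push_cast
  ring

lemma hasSum_bernoulliFun_div_factorial_mul_pow {x w : ℝ} (hx : x ∈ Set.Icc 0 1) (hw₀ : w ≠ 0)
    (hw : |w| < 2 * π) :
    HasSum (fun k => bernoulliFun k x / k ! * w ^ k) (w * exp (x * w) / (exp w - 1)) := by
  have hexp : exp w - 1 ≠ 0 := sub_ne_zero.2 <| (exp_eq_one_iff w).not.2 hw₀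
  have hsum := summable_bernoulliFun_div_factorial_mul_pow hx hw
  have hcoeff (k : ℕ) : bernoulliFun k x / k ! = (PowerSeries.mk fun n =>
      Polynomial.aeval x ((1 / n ! : ℚ) • Polynomial.bernoulli n)).coeff k := by
    simp [bernoulliFun, div_eq_inv_mul, Rat.smul_def]
  simp only [hcoeff] at hsum ⊢
  have hexp_sum := hasSum_coeff_exp_sub_one_mul_pow w
  have hmul := tsum_coeff_mul_pow_mul_tsum_coeff_mul_pow hsum.norm hexp_sum.summable.norm
  rw [Polynomial.bernoulli_generating_function x, hexp_sum.tsum_eq,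
    (hasSum_coeff_X_mul_rescale_exp_mul_pow x w).tsum_eq, ← eq_div_iff hexp] at hmul
  exact hmul ▸ hsum.hasSum

lemma mul_exp_div_exp_sub_one_sub (x : ℝ) {w : ℝ} (hw : w ≠ 0) :
    w * exp (x * w) / (exp w - 1) - -w * exp (x * -w) / (exp (-w) - 1) =
      w * (sinh ((x - 1 / 2) * w) / sinh (w / 2)) := by
  have exp_w : exp w = exp (w / 2) ^ 2 := by rw [sq, ← exp_add, add_halves]
  have exp_xw : exp (x * w) = exp ((x - 1 / 2) * w) * exp (w / 2) := by
    rw [← exp_add]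
    ring_nf
  have hexp : exp w - 1 ≠ 0 := sub_ne_zero.2 <| (exp_eq_one_iff w).not.2 hw
  have hexp' : 1 - exp w ≠ 0 := by rwa [← neg_ne_zero, neg_sub]
  have exp_half_pos := exp_pos (w / 2)
  have exp_shift_pos := exp_pos ((x - 1 / 2) * w)
  rw [mul_neg, sinh_eq, sinh_eq, exp_neg, exp_neg, exp_neg, exp_neg, exp_xw]
  rw [exp_w] at hexp hexp' ⊢
  generalize exp (w / 2) = a at *
  generalize exp ((x - 1 / 2) * w) = b at *
  field_simp
  ring

lemma hasSum_odd_bernoulliFun {x w : ℝ} (hx : x ∈ Set.Icc 0 1) (hw₀ : w ≠ 0) (hw : |w| < 2 * π) :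
    HasSum (fun k => 2 * bernoulliFun (2 * k + 1) x / (2 * k + 1)! * w ^ (2 * k))
      (sinh ((x - 1 / 2) * w) / sinh (w / 2)) := by
  have hdiff := (hasSum_bernoulliFun_div_factorial_mul_pow hx hw₀ hw).sub
    (hasSum_bernoulliFun_div_factorial_mul_pow hx (neg_ne_zero.2 hw₀) (by rwa [abs_neg]))
  have hinj : Function.Injective fun k : ℕ => 2 * k + 1 := fun _ _ h => by simpa using h
  have heven (n : ℕ) (hn : n ∉ Set.range fun k : ℕ => 2 * k + 1) :
      bernoulliFun n x / n ! * w ^ n - bernoulliFun n x / n ! * (-w) ^ n = 0 := by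
    have hn' : Even n := not_odd_iff_even.1 fun ⟨k, hk⟩ => hn ⟨k, hk.symm⟩
    rw [hn'.neg_pow, sub_self]
  rw [mul_exp_div_exp_sub_one_sub x hw₀, ← hinj.hasSum_iff heven] at hdiff
  have hterm (k : ℕ) : bernoulliFun (2 * k + 1) x / (2 * k + 1)! * w ^ (2 * k + 1) -
        bernoulliFun (2 * k + 1) x / (2 * k + 1)! * (-w) ^ (2 * k + 1) =
      w * (2 * bernoulliFun (2 * k + 1) x / (2 * k + 1)! * w ^ (2 * k)) := by
    rw [(odd_two_mul_add_one k).neg_pow]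
    ring
  simp only [Function.comp_def, hterm] at hdiff
  exact (hasSum_mul_left_iff hw₀).1 hdiff

end BernoulliGeneratingFunction

section SinhRatio

/-- The even function `f` with `gKer x y = f (x + y) - f (x - y)`, extended continuously to `0`. -/
noncomputable def sinhRatio (v : ℝ) : ℝ :=
  if v = 0 then 1 / 3 else Real.sinh (v / 2) / Real.sinh (3 * v / 2)

/-- The coefficient of `v ^ (2 * n)` in the Taylor series of `sinhRatio` at `0`. -/
noncomputable def sinhRatioCoeff (n : ℕ) : ℝ :=
  2 * 9 ^ n * bernoulliFun (2 * n + 1) (2 / 3) / (2 * n + 1).factorial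

lemma gKer_eq_sinhRatio_sub_sinhRatio {x y : ℝ} (hxy : x + y ≠ 0) :
    gKer x y = sinhRatio (x + y) - sinhRatio (x - y) := by
  rw [gKer, sinhRatio, if_neg hxy, sinhRatio]
  obtain rfl | hne := eq_or_ne x y
  · rw [if_pos rfl, sub_self, if_pos rfl, ← two_mul, mul_div_cancel_left₀ x two_ne_zero,
      mul_left_comm, mul_div_cancel_left₀ _ two_ne_zero]
  · rw [if_neg hne, if_neg (sub_ne_zero.2 hne)]

lemma hasSum_sinhRatio {v : ℝ} (hv : |3 * v| < 2 * Real.pi) :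
    HasSum (fun n => sinhRatioCoeff n * v ^ (2 * n)) (sinhRatio v) := by
  rw [sinhRatio]
  split_ifs with hv₀
  · have h := hasSum_single (f := fun n => sinhRatioCoeff n * v ^ (2 * n)) 0 fun n hn => by
      simp [hv₀, hn]
    convert h using 1
    norm_num [sinhRatioCoeff, bernoulliFun_one]
  · have h := hasSum_odd_bernoulliFun (x := 2 / 3) (by norm_num)
      (mul_ne_zero three_ne_zero hv₀) hv
    have half_eq : (2 / 3 - 1 / 2) * (3 * v) = v / 2 := by ring
    rw [half_eq] at h
    refine h.congr_fun fun n => ?_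
    rw [sinhRatioCoeff, mul_pow, pow_mul 3]
    ring

lemma abs_three_mul_lt_two_pi {v : ℝ} (hv : |v| ≤ 2) : |3 * v| < 2 * Real.pi := by
  rw [abs_mul, abs_of_pos three_pos]
  linarith [Real.pi_gt_three]

lemma summable_norm_sinhRatioCoeff_mul_pow :
    Summable fun n => ‖sinhRatioCoeff n‖ * (2 * 1) ^ (2 * n) := by
  have h := (hasSum_sinhRatio (abs_three_mul_lt_two_pi (v := 2) (by norm_num))).summable.norm
  simpa [abs_mul, abs_pow] using h

lemma gKer_eq_mul_doubleSeries {x y : ℝ} (hxy : x + y ≠ 0) (hx : |x| ≤ 1) (hy : |y| ≤ 1) :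
    gKer x y = x * y * doubleSeries (evenDiffCoeff sinhRatioCoeff) (x ^ 2) (y ^ 2) := by
  have hasSum_of_abs_le {v : ℝ} (hv : |v| ≤ |x| + |y|) :=
    hasSum_sinhRatio (abs_three_mul_lt_two_pi (v := v) (by linarith))
  rw [gKer_eq_sinhRatio_sub_sinhRatio hxy, mul_doubleSeries_evenDiffCoeff one_pos
    summable_norm_sinhRatioCoeff_mul_pow hx hy (hasSum_of_abs_le (abs_add_le x y))
    (hasSum_of_abs_le (abs_sub x y))]

end SinhRatio

section OddHilbert

lemma det_cauchy_succ {K : Type*} [Field K] {m : ℕ} {x y : Fin (m + 1) → K}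
    (h : ∀ i j, x i + y j ≠ 0) :
    (Matrix.of fun i j => (x i + y j)⁻¹).det =
      (x (Fin.last m) + y (Fin.last m))⁻¹ *
        (∏ i : Fin m, (x i.castSucc - x (Fin.last m)) / (x i.castSucc + y (Fin.last m))) *
        (∏ j : Fin m, (y j.castSucc - y (Fin.last m)) / (x (Fin.last m) + y j.castSucc)) *
        (Matrix.of fun i j : Fin m => (x i.castSucc + y j.castSucc)⁻¹).det := by
  let l := Fin.last m
  let c : Fin (m + 1) → K := fun i => if i = l then 0 else (x l + y l) / (x i + y l)
  let B : Matrix (Fin (m + 1)) (Fin (m + 1)) K :=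
    Matrix.of fun i j => (x i + y j)⁻¹ - c i * (x l + y j)⁻¹
  have det_eq : (Matrix.of fun i j => (x i + y j)⁻¹).det = B.det :=
    Matrix.det_eq_of_forall_row_eq_smul_add_const c l (by simp [c]) fun i j => by simp [B, c]
  have B_castSucc (i : Fin m) (j : Fin (m + 1)) : B i.castSucc j =
      (x i.castSucc - x l) / (x i.castSucc + y l) *
        ((y j - y l) / (x l + y j) * (x i.castSucc + y j)⁻¹) := by
    have hil := h i.castSucc (Fin.last m)
    have hij := h i.castSucc j
    have hlj := h (Fin.last m) j
    simp only [B, c, Matrix.of_apply, if_neg (Fin.castSucc_lt_last i).ne, l]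
    field_simp
    ring
  have B_castSucc_last (i : Fin m) : B i.castSucc l = 0 := by
    rw [B_castSucc, sub_self, zero_div, zero_mul, mul_zero]
  have B_last_last : B l l = (x l + y l)⁻¹ := by simp [B, c]
  have B_submatrix : B.submatrix Fin.castSucc Fin.castSucc = Matrix.of fun i j : Fin m =>
      (x i.castSucc - x l) / (x i.castSucc + y l) *
        (Matrix.of fun i j : Fin m => (y j.castSucc - y l) / (x l + y j.castSucc) *
          (Matrix.of fun i j : Fin m => (x i.castSucc + y j.castSucc)⁻¹) i j) i j :=
    Matrix.ext fun i j => B_castSucc i j.castSucc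
  rw [det_eq, Matrix.det_succ_column B l, Fin.sum_univ_castSucc]
  simp only [B_castSucc_last, mul_zero, zero_mul, sum_const_zero, zero_add]
  rw [Even.neg_one_pow ⟨_, rfl⟩, one_mul, B_last_last, Fin.succAbove_last, B_submatrix,
    Matrix.det_mul_column, Matrix.det_mul_row]
  ring

/-- The Hankel matrix of the reciprocals of `3, 5, 7, …`, a minor of the Hilbert matrix. -/
def oddHilbert (m : ℕ) : Matrix (Fin m) (Fin m) ℚ :=
  Matrix.of fun i j => ((2 * i + 2 * j + 3 : ℕ) : ℚ)⁻¹

open scoped Nat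

lemma prod_range_odd_mul_doubleFactorial (k n : ℕ) :
    (∏ i ∈ range n, (2 * k + 2 * i + 3)) * (2 * k + 1)‼ = (2 * (k + n) + 1)‼ := by
  induction n with
  | zero => simp
  | succ n ih =>
    have hsucc : 2 * (k + (n + 1)) + 1 = 2 * (k + n) + 1 + 2 := by ring
    rw [prod_range_succ, mul_right_comm, ih, hsucc, Nat.doubleFactorial_add_two]
    ring

lemma prod_range_two_mul_sub (m : ℕ) : ∏ i ∈ range m, 2 * (m - i) = 2 ^ m * m ! := by
  rw [prod_mul_distrib, prod_const, card_range, ← prod_range_add_one_eq_factorial,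
    ← prod_range_reflect]
  exact congrArg _ (prod_congr rfl fun i hi => by have := mem_range.1 hi; lia)

lemma prod_range_two_mul_sub_div_odd (m : ℕ) :
    ∏ i ∈ range m, ((2 * (m - i) : ℕ) : ℚ) / (2 * m + 2 * i + 3 : ℕ) =
      4 ^ m * (2 * m)! * (2 * m + 1)! / (4 * m + 1)! := by
  have h₁ : (2 * m + 1)! = (2 * m + 1)‼ * (2 ^ m * m !) := by
    rw [Nat.factorial_eq_mul_doubleFactorial, Nat.doubleFactorial_two_mul]
  have h₂ : (4 * m + 1)! = (∏ i ∈ range m, (2 * m + 2 * i + 3)) * (2 * m + 1)‼ *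
      (4 ^ m * (2 * m)!) := by
    rw [prod_range_odd_mul_doubleFactorial, Nat.factorial_eq_mul_doubleFactorial,
      show 4 * m = 2 * (2 * m) by ring, Nat.doubleFactorial_two_mul, pow_mul, ← two_mul]
    norm_num
  rw [prod_div_distrib, ← Nat.cast_prod, ← Nat.cast_prod, prod_range_two_mul_sub, h₁, h₂]
  push_cast
  field_simp

lemma det_oddHilbert_succ (m : ℕ) :
    (oddHilbert (m + 1)).det =
      (4 * m + 3 : ℚ)⁻¹ * (4 ^ m * (2 * m)! * (2 * m + 1)! / (4 * m + 1)!) ^ 2 *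
        (oddHilbert m).det := by
  have oddHilbert_eq (n : ℕ) : oddHilbert n =
      Matrix.of fun i j : Fin n => ((2 * i + 1 : ℚ) + (2 * j + 2))⁻¹ := by
    ext i j
    rw [oddHilbert, Matrix.of_apply, Matrix.of_apply]
    push_cast
    ring
  have hcauchy := det_cauchy_succ (x := fun i : Fin (m + 1) => (2 * i + 1 : ℚ))
    (y := fun j => 2 * j + 2) fun i j => by positivity
  simp only [Fin.val_last, Fin.val_castSucc] at hcauchy
  rw [oddHilbert_eq, oddHilbert_eq, hcauchy, mul_assoc _⁻¹, ← prod_mul_distrib,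
    ← prod_range_two_mul_sub_div_odd, ← prod_pow, prod_range]
  congr 2
  · ring
  · refine prod_congr rfl fun i _ => ?_
    rw [Nat.cast_mul, Nat.cast_sub i.2.le]
    push_cast
    ring

lemma prod_Ico_add_mul_factorial (a n : ℕ) :
    (∏ i ∈ Ico 1 (n + 1), (a + i)) * a ! = (a + n)! := by
  rw [prod_Ico_eq_prod_range, mul_comm, ← Nat.factorial_mul_ascFactorial,
    Nat.ascFactorial_eq_prod_range, Nat.add_sub_cancel]
  simp only [add_assoc]

lemma prod_Icc_prod_Ico_add_succ (m : ℕ) :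
    (∏ j ∈ Icc 1 (2 * (m + 1)), ∏ i ∈ Ico 1 j, (j + i)) * ((2 * m + 1)! * (2 * m + 2)!) =
      (∏ j ∈ Icc 1 (2 * m), ∏ i ∈ Ico 1 j, (j + i)) * ((4 * m + 1)! * (4 * m + 3)!) := by
  have h₁ := prod_Ico_add_mul_factorial (2 * m + 1) (2 * m)
  have h₂ := prod_Ico_add_mul_factorial (2 * m + 2) (2 * m + 1)
  rw [show 2 * m + 1 + 2 * m = 4 * m + 1 by ring] at h₁
  rw [show 2 * m + 2 + (2 * m + 1) = 4 * m + 3 by ring] at h₂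
  rw [mul_add_one, prod_Icc_succ_top (by lia), prod_Icc_succ_top (by lia), ← h₁, ← h₂]
  ring

lemma prod_Icc_prod_Ico_add_ne_zero (n : ℕ) : ∏ j ∈ Icc 1 n, ∏ i ∈ Ico 1 j, (j + i) ≠ 0 :=
  prod_ne_zero_iff.2 fun j _ => prod_ne_zero_iff.2 fun i hi => by
    have := mem_Ico.1 hi
    lia

lemma det_oddHilbert (m : ℕ) :
    (oddHilbert m).det = 4 ^ m ^ 2 * (∏ i ∈ range m, (2 * i + 1)! : ℕ) ^ 2 /
      (2 ^ m * (2 * m)! * (∏ j ∈ Icc 1 (2 * m), ∏ i ∈ Ico 1 j, (j + i) : ℕ)) := by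
  induction m with
  | zero => simp
  | succ m ih =>
    have triangle_succ : ((∏ j ∈ Icc 1 (2 * (m + 1)), ∏ i ∈ Ico 1 j, (j + i) : ℕ) : ℚ) =
        (∏ j ∈ Icc 1 (2 * m), ∏ i ∈ Ico 1 j, (j + i) : ℕ) * ((4 * m + 1)! * (4 * m + 3)!) /
          ((2 * m + 1)! * (2 * m + 2)!) := by
      rw [eq_div_iff (by positivity)]
      exact_mod_cast prod_Icc_prod_Ico_add_succ m
    have h₀ := Nat.cast_ne_zero (R := ℚ).2 (prod_Icc_prod_Ico_add_ne_zero (2 * m))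
    rw [det_oddHilbert_succ, ih, triangle_succ, prod_range_succ, Nat.cast_mul, mul_add_one 2 m,
      add_sq, pow_add, pow_add]
    simp only [Nat.factorial_succ]
    push_cast at h₀ ⊢
    field_simp
    ring

end OddHilbert

section PolynomialDeterminants

open Polynomial

variable {R n : Type*} [CommRing R] [Fintype n] [DecidableEq n]

lemma det_smul_add_mul_mul_pow_card {r : Type*} [Fintype r] [DecidableEq r] (t : R)
    (N : Matrix n n R) (U : Matrix n r R) (V : Matrix r n R) :
    (t • N + U * V).det * t ^ Fintype.card r =
      t ^ Fintype.card n * (Matrix.fromBlocks N U (-V) (t • 1)).det := by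
  have hscale : Matrix.fromBlocks (t • N) U (-V) 1 * Matrix.fromBlocks 1 0 0 (t • 1) =
      Matrix.fromBlocks (t • 1) 0 0 1 * Matrix.fromBlocks N U (-V) (t • 1) := by
    simp [Matrix.fromBlocks_multiply]
  have hdet := congrArg Matrix.det hscale
  rw [Matrix.det_mul, Matrix.det_mul, Matrix.det_fromBlocks_one₂₂, Matrix.det_fromBlocks_zero₂₁,
    Matrix.det_fromBlocks_zero₂₁] at hdet
  simpa using hdet

lemma pow_dvd_det_of_map_eval_eq_mul {r : Type*} [Fintype r] {M : Matrix n n R[X]} {a : R}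
    {U : Matrix n r R} {V : Matrix r n R} (hM : M.map (eval a) = U * V) :
    (X - C a) ^ (Fintype.card n - Fintype.card r) ∣ M.det := by
  classical
  obtain hle | hlt := le_total (Fintype.card n) (Fintype.card r)
  · rw [Nat.sub_eq_zero_of_le hle, pow_zero]
    exact one_dvd _
  choose N hN using fun i j => X_sub_C_dvd_sub_C_eval (a := a) (p := M i j)
  have hM' : M = (X - C a) • Matrix.of N + U.map C * V.map C := by
    ext1 i j
    have hij : C ((M i j).eval a) = (U.map C * V.map C) i j := by
      rw [← Matrix.map_mul, ← hM]
      rfl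
    rw [Matrix.add_apply, Matrix.smul_apply, smul_eq_mul, Matrix.of_apply, ← hN, ← hij,
      sub_add_cancel]
  have hdet := det_smul_add_mul_mul_pow_card (X - C a) (Matrix.of N) (U.map C) (V.map C)
  rw [← hM', ← Nat.sub_add_cancel hlt, pow_add, mul_right_comm] at hdet
  exact ⟨_, ((monic_X_sub_C a).pow _).isRegular.right hdet⟩

lemma natDegree_prod_le_sum {ι : Type*} (s : Finset ι) {f : ι → R[X]} {d : ι → ℕ}
    (h : ∀ i ∈ s, (f i).natDegree ≤ d i) : (∏ i ∈ s, f i).natDegree ≤ ∑ i ∈ s, d i :=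
  (natDegree_prod_le s f).trans (sum_le_sum h)

lemma coeff_prod_sum_of_natDegree_le {ι : Type*} (s : Finset ι) {f : ι → R[X]} {d : ι → ℕ}
    (h : ∀ i ∈ s, (f i).natDegree ≤ d i) :
    (∏ i ∈ s, f i).coeff (∑ i ∈ s, d i) = ∏ i ∈ s, (f i).coeff (d i) := by
  induction s using Finset.cons_induction with
  | empty => simp
  | cons a s ha ih =>
    rw [forall_mem_cons] at h
    rw [prod_cons, prod_cons, sum_cons, coeff_mul_add_eq_of_natDegree_le h.1
      (natDegree_prod_le_sum s h.2), ih h.2]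

variable {M : Matrix n n R[X]} {d e : n → ℕ}

lemma natDegree_det_le_sum (h : ∀ i j, (M i j).natDegree ≤ d i + e j) :
    M.det.natDegree ≤ ∑ i, (d i + e i) := by
  rw [Matrix.det_apply]
  refine natDegree_sum_le_of_forall_le _ _ fun σ _ => (natDegree_smul_le _ _).trans ?_
  refine (natDegree_prod_le_sum univ fun i _ => h (σ i) i).trans_eq ?_
  rw [sum_add_distrib, sum_add_distrib, Equiv.sum_comp σ d]

lemma coeff_det_sum_of_natDegree_le (h : ∀ i j, (M i j).natDegree ≤ d i + e j) :
    M.det.coeff (∑ i, (d i + e i)) = (Matrix.of fun i j => (M i j).coeff (d i + e j)).det := by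
  rw [Matrix.det_apply, Matrix.det_apply, finsetSum_coeff]
  refine sum_congr rfl fun σ _ => ?_
  have hsum : ∑ i, (d i + e i) = ∑ i, (d (σ i) + e i) := by
    rw [sum_add_distrib, sum_add_distrib, Equiv.sum_comp σ d]
  rw [hsum, coeff_smul, coeff_prod_sum_of_natDegree_le univ fun i _ => h (σ i) i]
  rfl

end PolynomialDeterminants

section BernoulliHankel

open Polynomial

lemma eval_bernoulli_add_natCast (N r : ℕ) (x : ℚ) :
    (Polynomial.bernoulli N).eval (x + r) =
      (Polynomial.bernoulli N).eval x + N * ∑ s ∈ range r, (x + s) ^ (N - 1) := by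
  induction r with
  | zero => simp
  | succ r ih =>
    rw [Nat.cast_succ, ← add_assoc, add_comm _ 1, bernoulli_eval_one_add, ih, sum_range_succ]
    ring

lemma eval_half_bernoulli_of_odd {N : ℕ} (hN : Odd N) :
    (Polynomial.bernoulli N).eval (1 / 2) = 0 := by
  have h := bernoulli_eval_one_sub N (1 / 2)
  rw [hN.neg_one_pow] at h
  norm_num at h
  linarith

lemma eval_one_bernoulli_of_odd {N : ℕ} (hN : Odd N) (hN' : 1 < N) :
    (Polynomial.bernoulli N).eval 1 = 0 := by
  rw [bernoulli_eval_one, bernoulli'_eq_zero_of_odd hN hN']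

lemma eval_half_natCast_add_one_bernoulli_of_odd {N : ℕ} (hN : Odd N) (hN' : 1 < N) (k : ℕ) :
    (Polynomial.bernoulli N).eval ((k + 1 : ℚ) / 2) =
      N * ∑ s ∈ range (k / 2), (((k % 2 : ℕ) + 1 : ℚ) / 2 + s) ^ (N - 1) := by
  have hbase : (Polynomial.bernoulli N).eval (((k % 2 : ℕ) + 1 : ℚ) / 2) = 0 := by
    obtain hk | hk := Nat.mod_two_eq_zero_or_one k
    · rw [hk, Nat.cast_zero, zero_add, eval_half_bernoulli_of_odd hN]
    · rw [hk, Nat.cast_one, add_self_div_two, eval_one_bernoulli_of_odd hN hN']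
  have hk : (k : ℚ) = 2 * (k / 2 : ℕ) + (k % 2 : ℕ) := by
    exact_mod_cast (Nat.div_add_mod k 2).symm
  have hsplit : (k + 1 : ℚ) / 2 = ((k % 2 : ℕ) + 1 : ℚ) / 2 + (k / 2 : ℕ) := by
    rw [hk]
    ring
  rw [hsplit, eval_bernoulli_add_natCast, hbase, zero_add]

/-- The Hankel matrix of the polynomials `B_N / N` with `N = 3, 5, 7, …`, where `B_N` is the `N`-th
Bernoulli polynomial. -/
noncomputable def bernoulliHankel (m : ℕ) : Matrix (Fin m) (Fin m) ℚ[X] :=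
  Matrix.of fun i j =>
    C (((2 * i + 2 * j + 3 : ℕ) : ℚ)⁻¹) * Polynomial.bernoulli (2 * i + 2 * j + 3)

lemma map_eval_bernoulliHankel_natCast (m k : ℕ) :
    (bernoulliHankel m).map (eval ((k + 1 : ℚ) / 2)) =
      (Matrix.of fun (i : Fin m) (s : Fin (k / 2)) =>
          (((k % 2 : ℕ) + 1 : ℚ) / 2 + (s : ℕ)) ^ (2 * (i : ℕ) + 1)) *
        Matrix.of fun (s : Fin (k / 2)) (j : Fin m) =>
          (((k % 2 : ℕ) + 1 : ℚ) / 2 + (s : ℕ)) ^ (2 * (j : ℕ) + 1) := by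
  ext i j
  have hodd : Odd (2 * (i : ℕ) + 2 * j + 3) := ⟨i + j + 1, by ring⟩
  rw [Matrix.map_apply, bernoulliHankel, Matrix.of_apply, eval_mul, eval_C,
    eval_half_natCast_add_one_bernoulli_of_odd hodd (by lia),
    inv_mul_cancel_left₀ (Nat.cast_ne_zero.2 (by lia)), Matrix.mul_apply, sum_range]
  refine sum_congr rfl fun s _ => ?_
  rw [Matrix.of_apply, Matrix.of_apply, ← pow_add]
  congr 1
  lia

lemma map_eval_bernoulliHankel_one_sub (m : ℕ) (x : ℚ) :
    (bernoulliHankel m).map (eval (1 - x)) = -(bernoulliHankel m).map (eval x) := by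
  ext i j
  have hodd : Odd (2 * (i : ℕ) + 2 * j + 3) := ⟨i + j + 1, by ring⟩
  rw [Matrix.neg_apply, Matrix.map_apply, Matrix.map_apply, bernoulliHankel, Matrix.of_apply,
    eval_mul, eval_mul, eval_C, eval_C, bernoulli_eval_one_sub, hodd.neg_one_pow, neg_one_mul,
    mul_neg]

lemma exists_map_eval_bernoulliHankel_eq_mul (m : ℕ) (k : ℤ) :
    ∃ (U : Matrix (Fin m) (Fin (k.natAbs / 2)) ℚ) (V : Matrix (Fin (k.natAbs / 2)) (Fin m) ℚ),
      (bernoulliHankel m).map (eval ((k + 1 : ℚ) / 2)) = U * V := by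
  obtain ⟨k, rfl | rfl⟩ := k.eq_nat_or_neg
  · rw [Int.natAbs_natCast, Int.cast_natCast]
    exact ⟨_, _, map_eval_bernoulliHankel_natCast m k⟩
  · have hreflect : (((-k : ℤ) : ℚ) + 1) / 2 = 1 - (k + 1) / 2 := by
      push_cast
      ring
    rw [Int.natAbs_neg, Int.natAbs_natCast, hreflect, map_eval_bernoulliHankel_one_sub,
      map_eval_bernoulliHankel_natCast, ← Matrix.neg_mul]
    exact ⟨_, _, rfl⟩

lemma card_sub_two_mul_eq_le (m : ℕ) (k : ℤ) :
    #{p ∈ Icc 1 (2 * m + 1) ×ˢ Icc 1 m | k = (p.1 : ℤ) - 2 * p.2} ≤ m - k.natAbs / 2 := by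
  have card_le_of_forall_snd_mem (s : Finset ℕ)
      (hs : ∀ p ∈ ({p ∈ Icc 1 (2 * m + 1) ×ˢ Icc 1 m | k = (p.1 : ℤ) - 2 * p.2} :
        Finset (ℕ × ℕ)), p.2 ∈ s) :
      #{p ∈ Icc 1 (2 * m + 1) ×ˢ Icc 1 m | k = (p.1 : ℤ) - 2 * p.2} ≤ #s := by
    refine card_le_card_of_injOn Prod.snd hs fun p hp q hq hpq => ?_
    simp only [coe_filter, Set.mem_ofPred_eq] at hp hq
    ext <;> lia
  obtain hk | hk := le_total 0 k
  · refine (card_le_of_forall_snd_mem (Icc 1 (m - k.natAbs / 2)) fun p hp => ?_).trans (by simp)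
    simp only [mem_filter, mem_product, mem_Icc] at hp ⊢
    lia
  · refine (card_le_of_forall_snd_mem (Icc (k.natAbs / 2 + 1) m) fun p hp => ?_).trans (by simp)
    simp only [mem_filter, mem_product, mem_Icc] at hp ⊢
    lia

lemma prod_dvd_det_bernoulliHankel (m : ℕ) :
    ∏ p ∈ Icc 1 (2 * m + 1) ×ˢ Icc 1 m, (X - C (((p.1 - 2 * p.2 : ℤ) + 1 : ℚ) / 2)) ∣
      (bernoulliHankel m).det := by
  rw [prod_comp (fun k : ℤ => X - C ((k + 1 : ℚ) / 2)) fun p : ℕ × ℕ => (p.1 - 2 * p.2 : ℤ)]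
  have hinj : Function.Injective fun k : ℤ => (k + 1 : ℚ) / 2 := fun k l h => by
    simpa [div_left_inj'] using h
  refine prod_dvd_of_coprime (fun k _ l _ hkl => (pairwise_coprime_X_sub_C hinj hkl).pow)
    fun k _ => ?_
  obtain ⟨U, V, hUV⟩ := exists_map_eval_bernoulliHankel_eq_mul m k
  refine (pow_dvd_pow _ ?_).trans (pow_dvd_det_of_map_eval_eq_mul hUV)
  simpa [eq_comm] using card_sub_two_mul_eq_le m k

lemma natDegree_bernoulli_le (N : ℕ) : (Polynomial.bernoulli N).natDegree ≤ N :=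
  natDegree_le_iff_coeff_eq_zero.2 fun i hi => by rw [coeff_bernoulli, if_neg hi.not_ge]

lemma coeff_bernoulli_self (N : ℕ) : (Polynomial.bernoulli N).coeff N = 1 := by
  simp [coeff_bernoulli]

lemma natDegree_bernoulliHankel_apply_le (m : ℕ) (i j : Fin m) :
    (bernoulliHankel m i j).natDegree ≤ 2 * i + 1 + (2 * j + 2) :=
  (natDegree_C_mul_le _ _).trans <| (natDegree_bernoulli_le _).trans_eq (by ring)

lemma sum_two_mul_add_one_add_two_mul_add_two (m : ℕ) :
    ∑ i : Fin m, (2 * (i : ℕ) + 1 + (2 * i + 2)) = (2 * m + 1) * m := by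
  induction m with
  | zero => simp
  | succ m ih =>
    simp only [Fin.sum_univ_castSucc, Fin.val_castSucc, Fin.val_last, ih]
    ring

lemma natDegree_det_bernoulliHankel_le (m : ℕ) :
    (bernoulliHankel m).det.natDegree ≤ (2 * m + 1) * m :=
  (natDegree_det_le_sum (natDegree_bernoulliHankel_apply_le m)).trans_eq
    (sum_two_mul_add_one_add_two_mul_add_two m)

lemma coeff_det_bernoulliHankel (m : ℕ) :
    (bernoulliHankel m).det.coeff ((2 * m + 1) * m) = (oddHilbert m).det := by
  rw [← sum_two_mul_add_one_add_two_mul_add_two,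
    coeff_det_sum_of_natDegree_le (natDegree_bernoulliHankel_apply_le m), oddHilbert]
  congr 2 with i j
  have hdeg : 2 * (i : ℕ) + 1 + (2 * j + 2) = 2 * i + 2 * j + 3 := by ring
  rw [hdeg, bernoulliHankel, Matrix.of_apply, coeff_C_mul, coeff_bernoulli_self, mul_one]

theorem eval_det_bernoulliHankel (m : ℕ) (x : ℚ) :
    (bernoulliHankel m).det.eval x =
      (oddHilbert m).det *
        ∏ i ∈ Icc 1 (2 * m + 1), ∏ j ∈ Icc 1 m, (x - (i - 2 * j + 1) / 2) := by
  set P : ℚ[X] := ∏ p ∈ Icc 1 (2 * m + 1) ×ˢ Icc 1 m,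
    (X - C (((p.1 - 2 * p.2 : ℤ) + 1 : ℚ) / 2)) with hP
  have hP_monic : P.Monic := monic_prod_of_monic _ _ fun p _ => monic_X_sub_C _
  have hP_natDegree : P.natDegree = (2 * m + 1) * m := by
    rw [hP, natDegree_prod_of_monic _ _ fun p _ => monic_X_sub_C _]
    simp
  have hdet := eq_leadingCoeff_mul_of_monic_of_dvd_of_natDegree_le hP_monic
    (prod_dvd_det_bernoulliHankel m)
    ((natDegree_det_bernoulliHankel_le m).trans_eq hP_natDegree.symm)
  have hlead : (bernoulliHankel m).det.leadingCoeff = (oddHilbert m).det := by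
    rw [← coeff_det_bernoulliHankel, hdet, ← hP_natDegree, coeff_C_mul, hP_monic.coeff_natDegree,
      mul_one, ← hdet]
  rw [hdet, hlead, eval_mul, eval_C, hP, eval_prod, prod_product]
  simp

end BernoulliHankel

section LimitConstant

open scoped Nat

lemma evenDiffCoeff_sinhRatioCoeff {m : ℕ} (i j : Fin m) :
    evenDiffCoeff sinhRatioCoeff i j =
      2 * 3 ^ (2 * (i : ℕ) + 1) / (2 * i + 1)! * (2 * 3 ^ (2 * (j : ℕ) + 1) / (2 * j + 1)! *
        ((bernoulliHankel m i j).eval (2 / 3) : ℚ)) := by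
  have bernoulliFun_eq (N : ℕ) :
      bernoulliFun N (2 / 3) = ((Polynomial.bernoulli N).eval (2 / 3) : ℚ) := by
    rw [bernoulliFun, show (2 / 3 : ℝ) = algebraMap ℚ ℝ (2 / 3) by norm_num,
      Polynomial.eval_map_apply, eq_ratCast]
  have hchoose := Nat.cast_add_choose ℝ (a := 2 * i + 1) (b := 2 * j + 1)
  rw [show 2 * (i : ℕ) + 1 + (2 * j + 1) = 2 * (i + j + 1) by ring] at hchoose
  have hindex : 2 * ((i : ℕ) + j + 1) + 1 = 2 * i + 2 * j + 3 := by ring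
  have hfactorial := Nat.factorial_succ (2 * (i + j + 1))
  rw [hindex] at hfactorial
  have nine_pow : (9 : ℝ) ^ ((i : ℕ) + j + 1) = 3 ^ (2 * (i : ℕ) + 1) * 3 ^ (2 * (j : ℕ) + 1) := by
    rw [show (9 : ℝ) = 3 ^ 2 by norm_num, ← pow_mul, ← pow_add]
    ring
  rw [evenDiffCoeff, sinhRatioCoeff, bernoulliFun_eq, hchoose, hindex, hfactorial, bernoulliHankel,
    Matrix.of_apply, Polynomial.eval_mul, Polynomial.eval_C, Rat.cast_mul, Rat.cast_inv,
    Rat.cast_natCast, Nat.cast_mul, nine_pow]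
  field_simp

lemma prod_range_three_pow_odd (m : ℕ) : ∏ i ∈ range m, 3 ^ (2 * i + 1) = 3 ^ m ^ 2 := by
  induction m with
  | zero => simp
  | succ m ih =>
    rw [prod_range_succ, ih, ← pow_add]
    ring

lemma det_evenDiffCoeff_sinhRatioCoeff (m : ℕ) :
    (Matrix.of fun i j : Fin m => evenDiffCoeff sinhRatioCoeff i j).det =
      (2 ^ m * 3 ^ m ^ 2 / (∏ i ∈ range m, (2 * i + 1)! : ℕ)) ^ 2 *
        ((bernoulliHankel m).det.eval (2 / 3) : ℚ) := by
  have prod_scale : ∏ i : Fin m, (2 * 3 ^ (2 * (i : ℕ) + 1) / (2 * i + 1)! : ℝ) =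
      2 ^ m * 3 ^ m ^ 2 / (∏ i ∈ range m, (2 * i + 1)! : ℕ) := by
    rw [← prod_range (fun i => (2 * 3 ^ (2 * i + 1) / (2 * i + 1)! : ℝ)), prod_div_distrib,
      prod_mul_distrib, prod_const, card_range, Nat.cast_prod]
    congr 2
    exact_mod_cast prod_range_three_pow_odd m
  have eval_det : ((bernoulliHankel m).map fun p => ((p.eval (2 / 3) : ℚ) : ℝ)).det =
      ((bernoulliHankel m).det.eval (2 / 3) : ℚ) :=
    (RingHom.map_det ((Rat.castHom ℝ).comp (Polynomial.evalRingHom (2 / 3)))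
      (bernoulliHankel m)).symm
  have hscale : (Matrix.of fun i j : Fin m => evenDiffCoeff sinhRatioCoeff i j) =
      Matrix.of fun i j : Fin m => (2 * 3 ^ (2 * (i : ℕ) + 1) / (2 * i + 1)! : ℝ) *
        (Matrix.of fun i j : Fin m => (2 * 3 ^ (2 * (j : ℕ) + 1) / (2 * j + 1)! : ℝ) *
          (bernoulliHankel m).map (fun p => ((p.eval (2 / 3) : ℚ) : ℝ)) i j) i j :=
    Matrix.ext evenDiffCoeff_sinhRatioCoeff
  rw [hscale, Matrix.det_mul_column, Matrix.det_mul_row, eval_det, prod_scale, ← mul_assoc,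
    ← sq]

lemma prod_Icc_prod_Ico_split {M : Type*} [CommMonoid M] (m n : ℕ) (F : ℕ → ℕ → M) :
    ∏ j ∈ Icc 1 (m + n), ∏ i ∈ Ico 1 j, F i j =
      (∏ j ∈ Icc 1 m, ∏ i ∈ Ico 1 j, F i j) *
        (∏ j ∈ Icc (m + 1) (m + n), ∏ i ∈ Ico (m + 1) j, F i j) *
        ∏ i ∈ Icc 1 m, ∏ j ∈ Icc 1 n, F i (m + j) := by
  induction n with
  | zero => simp
  | succ n ih =>
    have hlast : ∏ i ∈ Ico 1 (m + n + 1), F i (m + n + 1) =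
        (∏ i ∈ Icc 1 m, F i (m + n + 1)) * ∏ i ∈ Ico (m + 1) (m + n + 1), F i (m + n + 1) :=
      (prod_Ico_consecutive _ (by lia) (by lia)).symm
    simp only [← add_assoc, prod_Icc_succ_top (Nat.le_add_left 1 _), prod_mul_distrib]
    rw [ih, hlast, prod_Icc_succ_top (by lia)]
    simp only [mul_assoc, mul_left_comm, mul_comm]

lemma prod_Icc_prod_Ico_const_mul_pow {M : Type*} [CommMonoid M] (c : M) (m : ℕ) :
    (∏ j ∈ Icc 1 (2 * m), ∏ _i ∈ Ico 1 j, c) * c ^ m = c ^ (2 * m ^ 2) := by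
  have sum_eq : ∑ j ∈ Icc 1 (2 * m), (j - 1) + m = 2 * m ^ 2 := by
    induction m with
    | zero => simp
    | succ m ih =>
      rw [mul_add_one, sum_Icc_succ_top (by lia), sum_Icc_succ_top (by lia)]
      lia
  simp only [prod_const, Nat.card_Ico, prod_pow_eq_pow_sum, ← pow_add, sum_eq]

lemma prod_sq_sub_sq_mul (m : ℕ) :
    (∏ j ∈ Icc 1 m, ∏ i ∈ Ico 1 j, ((j : ℝ) ^ 2 - (i : ℝ) ^ 2)) *
        (∏ j ∈ Icc (m + 1) (2 * m), ∏ i ∈ Ico (m + 1) j, ((j : ℝ) ^ 2 - (i : ℝ) ^ 2)) *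
        (∏ i ∈ Icc 1 m, ∏ j ∈ Icc 1 m,
          9 * ((m : ℝ) + (j : ℝ) - (i : ℝ)) * ((m : ℝ) + (j : ℝ) + (i : ℝ))) =
      9 ^ m ^ 2 * ∏ j ∈ Icc 1 (2 * m), ∏ i ∈ Ico 1 j, ((j : ℝ) ^ 2 - (i : ℝ) ^ 2) := by
  have factor (i j : ℕ) : 9 * ((m : ℝ) + (j : ℝ) - (i : ℝ)) * ((m : ℝ) + (j : ℝ) + (i : ℝ)) =
      9 * (((m + j : ℕ) : ℝ) ^ 2 - (i : ℝ) ^ 2) := by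
    push_cast
    ring
  rw [two_mul, prod_Icc_prod_Ico_split m m fun i j => (j : ℝ) ^ 2 - (i : ℝ) ^ 2]
  simp only [factor, prod_mul_distrib, prod_const, Nat.card_Icc, Nat.add_sub_cancel, ← pow_mul, sq]
  ring

lemma prod_three_mul_sub_mul_prod_add (m : ℕ) :
    (∏ j ∈ Icc 1 (2 * m), ∏ i ∈ Ico 1 j, 3 * ((j : ℝ) - (i : ℝ))) *
        (3 ^ m * (∏ j ∈ Icc 1 (2 * m), ∏ i ∈ Ico 1 j, (j + i) : ℕ)) =
      9 ^ m ^ 2 * ∏ j ∈ Icc 1 (2 * m), ∏ i ∈ Ico 1 j, ((j : ℝ) ^ 2 - (i : ℝ) ^ 2) := by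
  have h₃ := prod_Icc_prod_Ico_const_mul_pow (3 : ℝ) m
  rw [pow_mul, show (3 : ℝ) ^ 2 = 9 by norm_num] at h₃
  push_cast
  simp only [← h₃, sq_sub_sq, prod_mul_distrib]
  ring

lemma eval_det_bernoulliHankel_two_thirds (m : ℕ) :
    ((bernoulliHankel m).det.eval (2 / 3) : ℚ) = (oddHilbert m).det / (36 ^ m ^ 2 * 6 ^ m) *
      ∏ i ∈ Icc 1 (2 * m + 1), ∏ j ∈ Icc 1 m, (1 + 3 * (2 * (j : ℚ) - (i : ℚ))) := by
  have factor (i j : ℕ) :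
      (2 / 3 - (i - 2 * j + 1) / 2 : ℚ) = (1 + 3 * (2 * (j : ℚ) - (i : ℚ))) / 6 := by ring
  have six_pow : ((6 : ℚ) ^ m) ^ (2 * m + 1) = 36 ^ m ^ 2 * 6 ^ m := by
    rw [show (36 : ℚ) = 6 ^ 2 by norm_num, ← pow_mul, ← pow_mul, ← pow_add]
    ring
  simp only [eval_det_bernoulliHankel, factor, prod_div_distrib, prod_const, Nat.card_Icc,
    Nat.add_sub_cancel, six_pow]
  ring

theorem det_evenDiffCoeff_sinhRatioCoeff_eq_prod (m : ℕ) :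
    (Matrix.of fun i j : Fin m => evenDiffCoeff sinhRatioCoeff i j).det =
      (∏ j ∈ Icc 1 (2 * m), ∏ i ∈ Ico 1 j, 3 * ((j : ℝ) - (i : ℝ))) *
         (∏ i ∈ Icc 1 (2 * m + 1), ∏ j ∈ Icc 1 m, (1 + 3 * (2 * (j : ℝ) - (i : ℝ)))) /
         (((2 * m).factorial : ℝ) *
          (∏ j ∈ Icc 1 m, ∏ i ∈ Ico 1 j, ((j : ℝ) ^ 2 - (i : ℝ) ^ 2)) *
          (∏ j ∈ Icc (m + 1) (2 * m), ∏ i ∈ Ico (m + 1) j, ((j : ℝ) ^ 2 - (i : ℝ) ^ 2)) *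
          (∏ i ∈ Icc 1 m, ∏ j ∈ Icc 1 m,
            9 * ((m : ℝ) + (j : ℝ) - (i : ℝ)) * ((m : ℝ) + (j : ℝ) + (i : ℝ)))) := by
  have triangle_sub_ne_zero :
      ∏ j ∈ Icc 1 (2 * m), ∏ i ∈ Ico 1 j, 3 * ((j : ℝ) - (i : ℝ)) ≠ 0 :=
    prod_ne_zero_iff.2 fun j _ => prod_ne_zero_iff.2 fun i hi =>
      mul_ne_zero three_ne_zero (sub_ne_zero.2 (Nat.cast_injective.ne (mem_Ico.1 hi).2.ne'))
  have triangle_add_ne_zero : ((∏ j ∈ Icc 1 (2 * m), ∏ i ∈ Ico 1 j, (j + i) : ℕ) : ℝ) ≠ 0 :=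
    Nat.cast_ne_zero.2 (prod_Icc_prod_Ico_add_ne_zero (2 * m))
  have factorials_ne_zero : ((∏ i ∈ range m, (2 * i + 1)! : ℕ) : ℝ) ≠ 0 :=
    Nat.cast_ne_zero.2 (prod_ne_zero_iff.2 fun i _ => Nat.factorial_ne_zero _)
  have h36 : (36 : ℝ) ^ m ^ 2 = 4 ^ m ^ 2 * (3 ^ m ^ 2) ^ 2 := by
    rw [← pow_right_comm, ← mul_pow]
    norm_num
  have h6 : (6 : ℝ) ^ m = 2 ^ m * 3 ^ m := by
    rw [← mul_pow]
    norm_num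
  rw [mul_assoc ((2 * m)! : ℝ), mul_assoc ((2 * m)! : ℝ), prod_sq_sub_sq_mul,
    ← prod_three_mul_sub_mul_prod_add, det_evenDiffCoeff_sinhRatioCoeff,
    eval_det_bernoulliHankel_two_thirds, det_oddHilbert]
  push_cast at triangle_add_ne_zero factorials_ne_zero ⊢
  rw [h36, h6]
  field_simp

end LimitConstant

section Determinant

variable {m : ℕ} {x y : Fin m → ℝ}

lemma det_vandermonde_mul_det_vandermonde_eq_prod (s t : Fin m → ℝ) :
    (Matrix.vandermonde s).det * (Matrix.vandermonde t).det =
      ∏ j, ∏ i with i < j, (s j - s i) * (t j - t i) := by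
  simp only [Matrix.det_vandermonde, ← prod_mul_distrib]
  exact prod_comm' fun i j => by simp

lemma det_gKer_eq_prod_mul_det (hx : ∀ i, 0 < x i ∧ x i ≤ 1) (hy : ∀ i, 0 < y i ∧ y i ≤ 1) :
    (Matrix.of fun i k => gKer (x i) (y k)).det = (∏ k, x k * y k) *
      (Matrix.of fun i k =>
        doubleSeries (evenDiffCoeff sinhRatioCoeff) (x i ^ 2) (y k ^ 2)).det := by
  have gKer_eq : (Matrix.of fun i k => gKer (x i) (y k)) = Matrix.of fun i k =>
      x i * (Matrix.of fun i k => y k * (Matrix.of fun i k =>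
        doubleSeries (evenDiffCoeff sinhRatioCoeff) (x i ^ 2) (y k ^ 2)) i k) i k :=
    Matrix.ext fun i k => by
      obtain ⟨hx₀, hx₁⟩ := hx i
      obtain ⟨hy₀, hy₁⟩ := hy k
      simpa [mul_assoc] using gKer_eq_mul_doubleSeries (add_pos hx₀ hy₀).ne'
        (by rwa [abs_of_pos hx₀]) (by rwa [abs_of_pos hy₀])
  rw [gKer_eq, Matrix.det_mul_column, Matrix.det_mul_row, prod_mul_distrib, mul_assoc]

lemma det_gKer_div_eq (hx : ∀ i, 0 < x i ∧ x i ≤ 1) (hy : ∀ i, 0 < y i ∧ y i ≤ 1) :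
    (Matrix.of fun i k => gKer (x i) (y k)).det / ((∏ k, x k * y k) *
        ∏ j, ∏ i with i < j, (x j ^ 2 - x i ^ 2) * (y j ^ 2 - y i ^ 2)) =
      (Matrix.of fun i k =>
        doubleSeries (evenDiffCoeff sinhRatioCoeff) (x i ^ 2) (y k ^ 2)).det /
        ((Matrix.vandermonde (x ^ 2)).det * (Matrix.vandermonde (y ^ 2)).det) := by
  have hprod : ∏ k, x k * y k ≠ 0 :=
    prod_ne_zero_iff.2 fun k _ => (mul_pos (hx k).1 (hy k).1).ne'
  rw [det_gKer_eq_prod_mul_det hx hy, det_vandermonde_mul_det_vandermonde_eq_prod,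
    mul_div_mul_left _ _ hprod]
  rfl

lemma injective_sq_of_strictMono (hx : StrictMono x) (hx₀ : ∀ i, 0 < x i) :
    (x ^ 2).Injective := fun i j hij =>
  hx.injective ((sq_eq_sq₀ (hx₀ i).le (hx₀ j).le).1 hij)

lemma eventually_forall_le_one : ∀ᶠ v : Fin m → ℝ in nhds 0, ∀ i, v i ≤ 1 :=
  pi_Iic_mem_nhds fun _ => one_pos

end Determinant

/-- Two-family homogeneous limit: for `m ≥ 1`, the ratio
`det_m[g(x_j,y_k)] / (∏_k x_k y_k · ∏_{i<j} (x_j²−x_i²)(y_j²−y_i²))`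
tends, as `(x,y) → (0,0)` within the domain `0 < x_1 < … < x_m`, `0 < y_1 < … < y_m`,
to the explicit constant `L_m`. -/
theorem det_g_two_family_homogeneous_limit (m : ℕ) (hm : 1 ≤ m) :
    Tendsto
      (fun p : (Fin m → ℝ) × (Fin m → ℝ) =>
        Matrix.det (Matrix.of fun j k : Fin m => gKer (p.1 j) (p.2 k)) /
          ((∏ k : Fin m, p.1 k * p.2 k) *
            ∏ j : Fin m, ∏ i ∈ Finset.univ.filter (fun i : Fin m => i < j),
              ((p.1 j) ^ 2 - (p.1 i) ^ 2) * ((p.2 j) ^ 2 - (p.2 i) ^ 2)))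
      (nhdsWithin (0, 0)
        {p : (Fin m → ℝ) × (Fin m → ℝ) |
          StrictMono p.1 ∧ StrictMono p.2 ∧ ∀ i, 0 < p.1 i ∧ 0 < p.2 i})
      (nhds
        ((∏ j ∈ Icc 1 (2 * m), ∏ i ∈ Ico 1 j, 3 * ((j : ℝ) - (i : ℝ))) *
         (∏ i ∈ Icc 1 (2 * m + 1), ∏ j ∈ Icc 1 m, (1 + 3 * (2 * (j : ℝ) - (i : ℝ)))) /
         (((2 * m).factorial : ℝ) *
          (∏ j ∈ Icc 1 m, ∏ i ∈ Ico 1 j, ((j : ℝ) ^ 2 - (i : ℝ) ^ 2)) *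
          (∏ j ∈ Icc (m + 1) (2 * m), ∏ i ∈ Ico (m + 1) j, ((j : ℝ) ^ 2 - (i : ℝ) ^ 2)) *
          (∏ i ∈ Icc 1 m, ∏ j ∈ Icc 1 m,
            9 * ((m : ℝ) + (j : ℝ) - (i : ℝ)) * ((m : ℝ) + (j : ℝ) + (i : ℝ)))))) := by
  rw [← det_evenDiffCoeff_sinhRatioCoeff_eq_prod]
  set D : Set ((Fin m → ℝ) × (Fin m → ℝ)) :=
    {p | StrictMono p.1 ∧ StrictMono p.2 ∧ ∀ i, 0 < p.1 i ∧ 0 < p.2 i}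
  have mem_D : ∀ᶠ p in nhdsWithin (0, 0) D, p ∈ D := eventually_mem_nhdsWithin
  have le_one : ∀ᶠ p in nhdsWithin (0, 0) D, (∀ i, p.1 i ≤ 1) ∧ ∀ i, p.2 i ≤ 1 :=
    eventually_nhdsWithin_of_eventually_nhds
      (eventually_forall_le_one.prod_nhds eventually_forall_le_one)
  have tendsto_sq : Tendsto (fun v : Fin m → ℝ => v ^ 2) (nhds 0) (nhds 0) :=
    (continuous_pow 2).tendsto' 0 0 (zero_pow two_ne_zero)
  have tendsto_fst : Tendsto Prod.fst (nhdsWithin (0, 0) D) (nhds 0) :=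
    continuousWithinAt_fst
  have tendsto_snd : Tendsto Prod.snd (nhdsWithin (0, 0) D) (nhds 0) :=
    continuousWithinAt_snd
  refine (tendsto_det_doubleSeries_div_det_vandermonde (pow_pos one_pos 2)
    (summable_norm_evenDiffCoeff_mul one_pos summable_norm_sinhRatioCoeff_mul_pow)
    (tendsto_sq.comp tendsto_fst) (tendsto_sq.comp tendsto_snd)
    (mem_D.mono fun p hp => injective_sq_of_strictMono hp.1 fun i => (hp.2.2 i).1)
    (mem_D.mono fun p hp => injective_sq_of_strictMono hp.2.1 fun i => (hp.2.2 i).2)).congr' ?_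
  filter_upwards [mem_D, le_one] with p ⟨_, _, hpos⟩ ⟨hx, hy⟩
  exact (det_gKer_div_eq (fun i => ⟨(hpos i).1, hx i⟩) fun i => ⟨(hpos i).2, hy i⟩).symm
end
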